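/- arXiv:2504.10091 — 6 statements merged into one kernel-verified Lean document; each statement's English description precedes it below -/
import Mathlib

section
/- (Moments estimate for the forward Euler scheme.) Let q ≥ 1, let f₀ be a probability measure on ℝ^d with finite q-th moment, let b be a probability measure on Θ with bounded support, and assume the collision map 𝒞 satisfies the linear growth condition |𝒞(v,v*,θ)| ≤ C_𝒞 (1+|θ|)(|v|+|v*|). Let Δt ∈ (0,1] and define the forward Euler iterates f_{n+1} = (1−Δt) f_n + Δt Q⁺(f_n,f_n), where Q⁺(f,f) = 𝒞_#(f ⊗ f ⊗ b). Then there exists a constant C > 0 depending only on q, C_𝒞 and M_∞(b) such that for all n ∈ ℕ, M_q(f_n)^{1/q} ≤ e^{C n Δt} M_q(f₀)^{1/q}. -/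
open MeasureTheory ProbabilityTheory Set
open scoped ENNReal

noncomputable section

/-- `Vec d` is the Euclidean space `ℝ^d`. -/
abbrev Vec (d : ℕ) := EuclideanSpace ℝ (Fin d)

/-- Wasserstein-1 distance between two measures, defined as the infimum of
transport costs over all couplings. -/
noncomputable def W1 {E : Type*} [MeasurableSpace E] [NormedAddCommGroup E]
    (μ ν : Measure E) : ℝ :=
  sInf { c : ℝ | ∃ γ : Measure (E × E),
    γ.map Prod.fst = μ ∧ γ.map Prod.snd = ν ∧ c = ∫ p, ‖p.1 - p.2‖ ∂γ }

/-- Gain part `Q⁺(f,g) = 𝒞_#(f ⊗ g ⊗ b)` of the collisional operator. -/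
noncomputable def Qgain {E P : Type*} [MeasurableSpace E] [MeasurableSpace P]
    (𝒞 : E → E → P → E) (b : Measure P) (f g : Measure E) : Measure E :=
  ((f.prod g).prod b).map fun p => 𝒞 p.1.1 p.1.2 p.2

/-- `q`-th moment `M_q(μ) = ∫ ‖v‖^q dμ`. -/
noncomputable def momq {E : Type*} [MeasurableSpace E] [NormedAddCommGroup E]
    (q : ℝ) (μ : Measure E) : ℝ := ∫ v, ‖v‖ ^ q ∂μ

/-- Bernoulli law `(1-p)δ₀ + pδ₁` on `ℝ`. -/
noncomputable def bern (p : ℝ) : Measure ℝ :=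
  ENNReal.ofReal (1 - p) • Measure.dirac (0 : ℝ) + ENNReal.ofReal p • Measure.dirac 1

/-- Uniform distribution on `[0,N)`. -/
noncomputable def unifIco (N : ℕ) : Measure ℝ :=
  ((N : ℝ≥0∞))⁻¹ • volume.restrict (Set.Ico (0 : ℝ) (N : ℝ))

/-- Index `j(α) = ⌊α⌋ + 1` (in 0-based indexing, `⌊α⌋`) of the collision partner. -/
def jIdx (N : ℕ) [NeZero N] (α : ℝ) : Fin N :=
  ⟨⌊α⌋.toNat % N, Nat.mod_lt _ (Nat.pos_of_ne_zero (NeZero.ne N))⟩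

/-- Empirical measure of a particle configuration. -/
noncomputable def empMeas {E : Type*} [MeasurableSpace E] {N : ℕ} (v : Fin N → E) : Measure E :=
  ((N : ℝ≥0∞))⁻¹ • ∑ i, Measure.dirac (v i)

/-- Forward Euler iterates `f_{n+1} = (1-Δt) f_n + Δt Q⁺(f_n,f_n)`. -/
noncomputable def eulerSeq {E P : Type*} [MeasurableSpace E] [MeasurableSpace P]
    (𝒞 : E → E → P → E) (b : Measure P) (f₀ : Measure E) (Δt : ℝ) : ℕ → Measure E
  | 0 => f₀
  | n + 1 =>
      ENNReal.ofReal (1 - Δt) • eulerSeq 𝒞 b f₀ Δt n +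
        ENNReal.ofReal Δt • Qgain 𝒞 b (eulerSeq 𝒞 b f₀ Δt n) (eulerSeq 𝒞 b f₀ Δt n)

/-- Piecewise-linear-in-time interpolation of the forward Euler iterates. -/
noncomputable def eulerInterp {E P : Type*} [MeasurableSpace E] [MeasurableSpace P]
    (𝒞 : E → E → P → E) (b : Measure P) (f₀ : Measure E) (Δt : ℝ) (t : ℝ) : Measure E :=
  ENNReal.ofReal (1 - (t - ⌊t / Δt⌋.toNat * Δt) / Δt) • eulerSeq 𝒞 b f₀ Δt ⌊t / Δt⌋.toNat +
    ENNReal.ofReal ((t - ⌊t / Δt⌋.toNat * Δt) / Δt) • eulerSeq 𝒞 b f₀ Δt (⌊t / Δt⌋.toNat + 1)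

/-- Monte Carlo rate `ε(N)` from `fournier2015rate`. -/
noncomputable def epsRate (d N : ℕ) : ℝ :=
  if d = 1 then (N : ℝ) ^ (-(1/2 : ℝ))
  else if d = 2 then (N : ℝ) ^ (-(1/2 : ℝ)) * Real.log (1 + N)
  else (N : ℝ) ^ (-(1 / (d : ℝ)))

/-- Right-hand side of the weak formulation of the Boltzmann-type equation,
tested against `φ`. -/
noncomputable def collRHS {E P : Type*} [MeasurableSpace E] [MeasurableSpace P]
    (𝒞 : E → E → P → E) (b : Measure P) (μ : Measure E) (φ : E → ℝ) : ℝ :=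
  (1/2) * ∫ p, (φ (𝒞 p.1.1 p.1.2 p.2) + φ (𝒞 p.1.2 p.1.1 p.2) - φ p.1.1 - φ p.1.2)
    ∂((μ.prod μ).prod b)

/-- Weak measure solution of `∂ₜ f = Q(f,f)` on `[0,T]`, with values in `P₁(ℝ^d)`
(continuity in the Wasserstein-1 distance), in integrated-in-time form. -/
def IsWeakSol {d m : ℕ} (𝒞 : Vec d → Vec d → Vec m → Vec d) (b : Measure (Vec m))
    (T : ℝ) (f : ℝ → Measure (Vec d)) : Prop :=
  (∀ t ∈ Set.Icc (0:ℝ) T, IsProbabilityMeasure (f t)) ∧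
  (∀ t ∈ Set.Icc (0:ℝ) T, Integrable (fun v : Vec d => ‖v‖) (f t)) ∧
  (∀ t ∈ Set.Icc (0:ℝ) T, ∀ ε > (0:ℝ), ∃ δ > (0:ℝ),
     ∀ s ∈ Set.Icc (0:ℝ) T, |s - t| < δ → W1 (f s) (f t) < ε) ∧
  ∀ φ : Vec d → ℝ, ContDiff ℝ (⊤ : ℕ∞) φ → HasCompactSupport φ →
    ∀ t ∈ Set.Icc (0:ℝ) T,
      (∫ v, φ v ∂(f t)) - (∫ v, φ v ∂(f 0)) = ∫ s in (0:ℝ)..t, collRHS 𝒞 b (f s) φ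

/-- One collision step: integrability and the moment bound. -/
lemma Qgain_moment {d m : ℕ} (q : ℝ) (hq : 1 ≤ q) (Cc Mb : ℝ) (hCc : 0 < Cc) (hMb : 0 ≤ Mb)
    (b : Measure (Vec m)) [IsProbabilityMeasure b] (hb : ∀ᵐ θ ∂b, ‖θ‖ ≤ Mb)
    (𝒞 : Vec d → Vec d → Vec m → Vec d)
    (hm : Measurable (fun p : (Vec d × Vec d) × Vec m => 𝒞 p.1.1 p.1.2 p.2))
    (hg : ∀ v vs θ, ‖𝒞 v vs θ‖ ≤ Cc * (1 + ‖θ‖) * (‖v‖ + ‖vs‖))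
    (μ : Measure (Vec d)) [IsProbabilityMeasure μ]
    (hi : Integrable (fun v : Vec d => ‖v‖ ^ q) μ) :
    Integrable (fun v : Vec d => ‖v‖ ^ q) (Qgain 𝒞 b μ μ) ∧
      momq q (Qgain 𝒞 b μ μ) ≤ (Cc * (1 + Mb) * 2) ^ q * momq q μ := by
  have hq0 : 0 ≤ q := by linarith
  set A := Cc * (1 + Mb) with hA
  have hA0 : 0 ≤ A := by positivity
  set ν := (μ.prod μ).prod b with hν
  have hmeas : Measurable (fun v : Vec d => ‖v‖ ^ q) := by fun_prop
  have hi1 : Integrable (fun p : (Vec d × Vec d) × Vec m => ‖p.1.1‖ ^ q) ν :=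
    (hi.comp_fst μ).comp_fst b
  have hi2 : Integrable (fun p : (Vec d × Vec d) × Vec m => ‖p.1.2‖ ^ q) ν :=
    (hi.comp_snd μ).comp_fst b
  have he1 : ∫ p : (Vec d × Vec d) × Vec m, ‖p.1.1‖ ^ q ∂ν = momq q μ := by
    rw [hν, integral_fun_fst (fun p : Vec d × Vec d => ‖p.1‖ ^ q),
      integral_fun_fst (fun p : Vec d => ‖p‖ ^ q)]
    simp [momq]
  have he2 : ∫ p : (Vec d × Vec d) × Vec m, ‖p.1.2‖ ^ q ∂ν = momq q μ := by
    rw [hν, integral_fun_fst (fun p : Vec d × Vec d => ‖p.2‖ ^ q),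
      integral_fun_snd (fun p : Vec d => ‖p‖ ^ q)]
    simp [momq]
  have hb' : ∀ᵐ p ∂ν, ‖p.2‖ ≤ Mb := Measure.quasiMeasurePreserving_snd.ae hb
  have hbound : ∀ᵐ p ∂ν, ‖𝒞 p.1.1 p.1.2 p.2‖ ^ q ≤
      A ^ q * 2 ^ (q - 1) * (‖p.1.1‖ ^ q + ‖p.1.2‖ ^ q) := by
    filter_upwards [hb'] with p hp
    have h1 : ‖𝒞 p.1.1 p.1.2 p.2‖ ≤ A * (‖p.1.1‖ + ‖p.1.2‖) := by
      refine (hg _ _ _).trans ?_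
      rw [hA]
      gcongr
    calc ‖𝒞 p.1.1 p.1.2 p.2‖ ^ q ≤ (A * (‖p.1.1‖ + ‖p.1.2‖)) ^ q :=
          Real.rpow_le_rpow (norm_nonneg _) h1 hq0
      _ = A ^ q * (‖p.1.1‖ + ‖p.1.2‖) ^ q := Real.mul_rpow hA0 (by positivity)
      _ ≤ A ^ q * (2 ^ (q - 1) * (‖p.1.1‖ ^ q + ‖p.1.2‖ ^ q)) := by
          gcongr
          have := NNReal.rpow_add_le_mul_rpow_add_rpow ‖p.1.1‖₊ ‖p.1.2‖₊ hq
          exact_mod_cast this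
      _ = _ := by ring
  have hiB : Integrable (fun p : (Vec d × Vec d) × Vec m =>
      A ^ q * 2 ^ (q - 1) * (‖p.1.1‖ ^ q + ‖p.1.2‖ ^ q)) ν := (hi1.add hi2).const_mul _
  have hiC : Integrable (fun p : (Vec d × Vec d) × Vec m => ‖𝒞 p.1.1 p.1.2 p.2‖ ^ q) ν := by
    refine hiB.mono' (hmeas.comp hm).aestronglyMeasurable ?_
    filter_upwards [hbound] with p hp
    rwa [Real.norm_of_nonneg (by positivity)]
  refine ⟨?_, ?_⟩
  · rw [Qgain, integrable_map_measure hmeas.aestronglyMeasurable hm.aemeasurable]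
    exact hiC
  · rw [momq, Qgain, integral_map hm.aemeasurable hmeas.aestronglyMeasurable]
    refine (integral_mono_ae hiC hiB hbound).trans_eq ?_
    rw [integral_const_mul, integral_add hi1 hi2, he1, he2, Real.mul_rpow hA0 (by norm_num),
      Real.rpow_sub_one (by norm_num)]
    ring

/-- moments estimate for the forward Euler scheme
`f_{n+1} = (1-Δt) f_n + Δt Q⁺(f_n,f_n)`. -/
theorem euler_moment_estimate (q : ℝ) (hq : 1 ≤ q) (Cc Mb : ℝ) (hCc : 0 < Cc) (hMb : 0 ≤ Mb) :
    ∃ C > (0:ℝ),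
      ∀ (d m : ℕ) (b : Measure (Vec m)), IsProbabilityMeasure b →
      (∀ᵐ θ ∂b, ‖θ‖ ≤ Mb) →
      ∀ (𝒞 : Vec d → Vec d → Vec m → Vec d),
        Measurable (fun p : (Vec d × Vec d) × Vec m => 𝒞 p.1.1 p.1.2 p.2) →
        (∀ v vs θ, ‖𝒞 v vs θ‖ ≤ Cc * (1 + ‖θ‖) * (‖v‖ + ‖vs‖)) →
      ∀ f₀ : Measure (Vec d), IsProbabilityMeasure f₀ →
        Integrable (fun v : Vec d => ‖v‖ ^ q) f₀ →
      ∀ Δt : ℝ, Δt ∈ Set.Ioc (0:ℝ) 1 →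
      ∀ n : ℕ,
        (momq q (eulerSeq 𝒞 b f₀ Δt n)) ^ (1/q) ≤
          Real.exp (C * n * Δt) * (momq q f₀) ^ (1/q) := by
  have hq0 : 0 < q := by linarith
  set K := (Cc * (1 + Mb) * 2) ^ q with hK
  have hK0 : 0 < K := by positivity
  refine ⟨K, hK0, ?_⟩
  intro d m b hbp hb 𝒞 hm hg f₀ hf₀ hi Δt hΔ n
  obtain ⟨hΔ0, hΔ1⟩ := hΔ
  have key : ∀ n : ℕ, IsProbabilityMeasure (eulerSeq 𝒞 b f₀ Δt n) ∧
      Integrable (fun v : Vec d => ‖v‖ ^ q) (eulerSeq 𝒞 b f₀ Δt n) ∧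
      momq q (eulerSeq 𝒞 b f₀ Δt n) ≤ Real.exp (K * n * Δt) * momq q f₀ := by
    intro n
    induction n with
    | zero => exact ⟨hf₀, hi, by simp [eulerSeq]⟩
    | succ n ih =>
      obtain ⟨hp, hin, hle⟩ := ih
      obtain ⟨hQi, hQ⟩ := Qgain_moment q hq Cc Mb hCc hMb b hb 𝒞 hm hg _ hin
      have hQp : IsProbabilityMeasure
          (Qgain 𝒞 b (eulerSeq 𝒞 b f₀ Δt n) (eulerSeq 𝒞 b f₀ Δt n)) :=
        Measure.isProbabilityMeasure_map hm.aemeasurable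
      have h1 := hin.smul_measure (c := ENNReal.ofReal (1 - Δt)) ENNReal.ofReal_ne_top
      have h2 := hQi.smul_measure (c := ENNReal.ofReal Δt) ENNReal.ofReal_ne_top
      have hM0 : 0 ≤ momq q (eulerSeq 𝒞 b f₀ Δt n) :=
        integral_nonneg fun v => by positivity
      refine ⟨⟨?_⟩, h1.add_measure h2, ?_⟩
      · simp only [eulerSeq, Measure.add_apply, Measure.smul_apply, measure_univ, smul_eq_mul,
          mul_one]
        rw [← ENNReal.ofReal_add (by linarith) hΔ0.le]
        simp
      · have heq : momq q (eulerSeq 𝒞 b f₀ Δt (n + 1)) =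
            (1 - Δt) * momq q (eulerSeq 𝒞 b f₀ Δt n) +
            Δt * momq q (Qgain 𝒞 b (eulerSeq 𝒞 b f₀ Δt n) (eulerSeq 𝒞 b f₀ Δt n)) := by
          simp only [momq, eulerSeq]
          rw [integral_add_measure h1 h2, integral_smul_measure, integral_smul_measure,
            ENNReal.toReal_ofReal (by linarith), ENNReal.toReal_ofReal hΔ0.le]
          simp only [smul_eq_mul]
        rw [heq]
        have hexp := Real.add_one_le_exp (K * Δt)
        calc _ ≤ (1 - Δt) * momq q (eulerSeq 𝒞 b f₀ Δt n) +
              Δt * (K * momq q (eulerSeq 𝒞 b f₀ Δt n)) := by gcongr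
          _ = (1 - Δt + K * Δt) * momq q (eulerSeq 𝒞 b f₀ Δt n) := by ring
          _ ≤ Real.exp (K * Δt) * momq q (eulerSeq 𝒞 b f₀ Δt n) := by
              gcongr
              linarith
          _ ≤ Real.exp (K * Δt) * (Real.exp (K * n * Δt) * momq q f₀) := by gcongr
          _ = _ := by
              rw [← mul_assoc, ← Real.exp_add]
              congr 2
              push_cast
              ring
  obtain ⟨-, -, h⟩ := key n
  have hM0 : 0 ≤ momq q (eulerSeq 𝒞 b f₀ Δt n) := integral_nonneg fun v => by positivity
  have hM00 : 0 ≤ momq q f₀ := integral_nonneg fun v => by positivity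
  calc _ ≤ (Real.exp (K * n * Δt) * momq q f₀) ^ (1 / q) :=
        Real.rpow_le_rpow hM0 h (by positivity)
    _ = Real.exp (K * n * Δt) ^ (1 / q) * momq q f₀ ^ (1 / q) :=
        Real.mul_rpow (Real.exp_pos _).le hM00
    _ ≤ _ := by
        gcongr
        rw [← Real.exp_mul]
        apply Real.exp_le_exp.mpr
        have hx : 0 ≤ K * n * Δt := by positivity
        have : 1 / q ≤ 1 := by rw [div_le_one hq0]; exact hq
        nlinarith


end
end

section
/- (Lipschitz continuity of the gain operator in Wasserstein-1.) Let b be a probability measure on Θ with bounded support and let 𝒞 : ℝ^d × ℝ^d × Θ → ℝ^d satisfy the Lipschitz condition |𝒞(v,v*,θ) − 𝒞(w,w*,θ)| ≤ L_𝒞 (1+|θ|)(|v−w| + |v*−w*|) for all v,v*,w,w*,θ. Define Q⁺(f,g) := 𝒞_#(f ⊗ g ⊗ b). Then for all probability measures f₁, f₂, g₁, g₂ on ℝ^d with finite first moments, W₁(Q⁺(f₁,f₂), Q⁺(g₁,g₂)) ≤ L_𝒞 (1 + M_∞(b)) (W₁(f₁,g₁) + W₁(f₂,g₂)). -/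
open MeasureTheory ProbabilityTheory Set
open scoped ENNReal

noncomputable section

/-- Transport cost of two integrable marginals is integrable under any coupling. -/
theorem coupling_integrable {d : ℕ} {μ ν : Measure (Vec d)} {γ : Measure (Vec d × Vec d)}
    (h1 : γ.map Prod.fst = μ) (h2 : γ.map Prod.snd = ν)
    (hμ : Integrable (fun v : Vec d => ‖v‖) μ) (hν : Integrable (fun v : Vec d => ‖v‖) ν) :
    Integrable (fun p : Vec d × Vec d => ‖p.1 - p.2‖) γ := by
  subst h1 h2
  have a := hμ.comp_measurable measurable_fst
  have c := hν.comp_measurable measurable_snd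
  refine (a.add c).mono' (by fun_prop) (Filter.Eventually.of_forall fun p => ?_)
  simpa using norm_sub_le p.1 p.2

/-- The set of transport costs is nonempty for probability measures. -/
theorem cost_nonempty {d : ℕ} (μ ν : Measure (Vec d)) [IsProbabilityMeasure μ]
    [IsProbabilityMeasure ν] :
    { c : ℝ | ∃ γ : Measure (Vec d × Vec d),
      γ.map Prod.fst = μ ∧ γ.map Prod.snd = ν ∧ c = ∫ p, ‖p.1 - p.2‖ ∂γ }.Nonempty :=
  ⟨_, μ.prod ν, by simp [Measure.map_fst_prod], by simp [Measure.map_snd_prod], rfl⟩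

/-- Pushing forward a product coupling. -/
theorem prod_push {d m : ℕ} (b : Measure (Vec m)) [IsProbabilityMeasure b]
    (𝒞 : Vec d → Vec d → Vec m → Vec d)
    (hmeas : Measurable fun p : (Vec d × Vec d) × Vec m => 𝒞 p.1.1 p.1.2 p.2)
    (γ₁ γ₂ : Measure (Vec d × Vec d)) [IsProbabilityMeasure γ₁] [IsProbabilityMeasure γ₂]
    (π : Vec d × Vec d → Vec d) (hπ : Measurable π) :
    ((γ₁.prod γ₂).prod b).map (fun q => 𝒞 (π q.1.1) (π q.1.2) q.2) =
      Qgain 𝒞 b (γ₁.map π) (γ₂.map π) := by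
  have := Measure.isProbabilityMeasure_map (μ := γ₁) hπ.aemeasurable
  have := Measure.isProbabilityMeasure_map (μ := γ₂) hπ.aemeasurable
  unfold Qgain
  rw [Measure.map_prod_map _ _ hπ hπ]
  conv_rhs => rw [← Measure.map_id (μ := b)]
  rw [Measure.map_prod_map _ _ (hπ.prodMap hπ) measurable_id, Measure.map_map hmeas (by fun_prop)]
  rfl

/-- Lipschitz continuity of the gain operator in Wasserstein-1. -/
theorem gain_lipschitz_W1 (d m : ℕ) (b : Measure (Vec m)) [IsProbabilityMeasure b]
    (Mb : ℝ) (hMb : 0 ≤ Mb) (hb : ∀ᵐ θ ∂b, ‖θ‖ ≤ Mb)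
    (Lc : ℝ) (hLc : 0 < Lc)
    (𝒞 : Vec d → Vec d → Vec m → Vec d)
    (hmeas : Measurable fun p : (Vec d × Vec d) × Vec m => 𝒞 p.1.1 p.1.2 p.2)
    (hlip : ∀ v vs w ws θ,
      ‖𝒞 v vs θ - 𝒞 w ws θ‖ ≤ Lc * (1 + ‖θ‖) * (‖v - w‖ + ‖vs - ws‖))
    (f₁ f₂ g₁ g₂ : Measure (Vec d))
    [IsProbabilityMeasure f₁] [IsProbabilityMeasure f₂]
    [IsProbabilityMeasure g₁] [IsProbabilityMeasure g₂]
    (hf₁ : Integrable (fun v : Vec d => ‖v‖) f₁)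
    (hf₂ : Integrable (fun v : Vec d => ‖v‖) f₂)
    (hg₁ : Integrable (fun v : Vec d => ‖v‖) g₁)
    (hg₂ : Integrable (fun v : Vec d => ‖v‖) g₂) :
    W1 (Qgain 𝒞 b f₁ f₂) (Qgain 𝒞 b g₁ g₂) ≤
      Lc * (1 + Mb) * (W1 f₁ g₁ + W1 f₂ g₂) := by
  have hK : 0 ≤ Lc * (1 + Mb) := by positivity
  have key : ∀ c₁ ∈ { c : ℝ | ∃ γ : Measure (Vec d × Vec d),
        γ.map Prod.fst = f₁ ∧ γ.map Prod.snd = g₁ ∧ c = ∫ p, ‖p.1 - p.2‖ ∂γ },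
      ∀ c₂ ∈ { c : ℝ | ∃ γ : Measure (Vec d × Vec d),
        γ.map Prod.fst = f₂ ∧ γ.map Prod.snd = g₂ ∧ c = ∫ p, ‖p.1 - p.2‖ ∂γ },
      W1 (Qgain 𝒞 b f₁ f₂) (Qgain 𝒞 b g₁ g₂) ≤ Lc * (1 + Mb) * (c₁ + c₂) := by
    rintro c₁ ⟨γ₁, h11, h12, rfl⟩ c₂ ⟨γ₂, h21, h22, rfl⟩
    have i1 := coupling_integrable h11 h12 hf₁ hg₁
    have i2 := coupling_integrable h21 h22 hf₂ hg₂
    have p1 : IsProbabilityMeasure γ₁ := by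
      constructor
      have := measure_univ (μ := f₁)
      rwa [← h11, Measure.map_apply measurable_fst MeasurableSet.univ, preimage_univ] at this
    have p2 : IsProbabilityMeasure γ₂ := by
      constructor
      have := measure_univ (μ := f₂)
      rwa [← h21, Measure.map_apply measurable_fst MeasurableSet.univ, preimage_univ] at this
    have m1 : Measurable fun q : ((Vec d × Vec d) × (Vec d × Vec d)) × Vec m =>
        𝒞 q.1.1.1 q.1.2.1 q.2 :=
      hmeas.comp (g := fun p : (Vec d × Vec d) × Vec m => 𝒞 p.1.1 p.1.2 p.2)
        (f := fun q : ((Vec d × Vec d) × (Vec d × Vec d)) × Vec m =>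
          ((q.1.1.1, q.1.2.1), q.2)) (by fun_prop)
    have m2 : Measurable fun q : ((Vec d × Vec d) × (Vec d × Vec d)) × Vec m =>
        𝒞 q.1.1.2 q.1.2.2 q.2 :=
      hmeas.comp (g := fun p : (Vec d × Vec d) × Vec m => 𝒞 p.1.1 p.1.2 p.2)
        (f := fun q : ((Vec d × Vec d) × (Vec d × Vec d)) × Vec m =>
          ((q.1.1.2, q.1.2.2), q.2)) (by fun_prop)
    have j1 : Integrable (fun q : ((Vec d × Vec d) × (Vec d × Vec d)) × Vec m =>
        ‖q.1.1.1 - q.1.1.2‖) ((γ₁.prod γ₂).prod b) := (i1.comp_fst γ₂).comp_fst b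
    have j2 : Integrable (fun q : ((Vec d × Vec d) × (Vec d × Vec d)) × Vec m =>
        ‖q.1.2.1 - q.1.2.2‖) ((γ₁.prod γ₂).prod b) := (i2.comp_snd γ₁).comp_fst b
    have e1 : ∫ q, ‖q.1.1.1 - q.1.1.2‖ ∂((γ₁.prod γ₂).prod b) = ∫ p, ‖p.1 - p.2‖ ∂γ₁ := by
      rw [integral_fun_fst (μ := γ₁.prod γ₂) (ν := b)
          (fun r : (Vec d × Vec d) × (Vec d × Vec d) => ‖r.1.1 - r.1.2‖),
        integral_fun_fst (μ := γ₁) (ν := γ₂) (fun r : Vec d × Vec d => ‖r.1 - r.2‖)]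
      simp
    have e2 : ∫ q, ‖q.1.2.1 - q.1.2.2‖ ∂((γ₁.prod γ₂).prod b) = ∫ p, ‖p.1 - p.2‖ ∂γ₂ := by
      rw [integral_fun_fst (μ := γ₁.prod γ₂) (ν := b)
          (fun r : (Vec d × Vec d) × (Vec d × Vec d) => ‖r.2.1 - r.2.2‖),
        integral_fun_snd (μ := γ₁) (ν := γ₂) (fun r : Vec d × Vec d => ‖r.1 - r.2‖)]
      simp
    have hb' : ∀ᵐ q ∂((γ₁.prod γ₂).prod b), ‖q.2‖ ≤ Mb :=
      Measure.quasiMeasurePreserving_snd.ae hb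
    calc W1 (Qgain 𝒞 b f₁ f₂) (Qgain 𝒞 b g₁ g₂)
        ≤ ∫ p, ‖p.1 - p.2‖ ∂(((γ₁.prod γ₂).prod b).map
            (fun q => (𝒞 q.1.1.1 q.1.2.1 q.2, 𝒞 q.1.1.2 q.1.2.2 q.2))) := by
          refine csInf_le ⟨0, ?_⟩ ⟨_, ?_, ?_, rfl⟩
          · rintro c ⟨γ, -, -, rfl⟩
            exact integral_nonneg fun _ => norm_nonneg _
          · rw [Measure.map_map measurable_fst (m1.prodMk m2), ← h11, ← h21]
            exact prod_push b 𝒞 hmeas γ₁ γ₂ Prod.fst measurable_fst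
          · rw [Measure.map_map measurable_snd (m1.prodMk m2), ← h12, ← h22]
            exact prod_push b 𝒞 hmeas γ₁ γ₂ Prod.snd measurable_snd
      _ = ∫ q, ‖𝒞 q.1.1.1 q.1.2.1 q.2 - 𝒞 q.1.1.2 q.1.2.2 q.2‖ ∂((γ₁.prod γ₂).prod b) :=
          integral_map (m1.prodMk m2).aemeasurable (by fun_prop)
      _ ≤ ∫ q, Lc * (1 + Mb) * (‖q.1.1.1 - q.1.1.2‖ + ‖q.1.2.1 - q.1.2.2‖)
            ∂((γ₁.prod γ₂).prod b) := by
          refine integral_mono_of_nonneg (Filter.Eventually.of_forall fun _ => norm_nonneg _)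
            ((j1.add j2).const_mul _) ?_
          filter_upwards [hb'] with q hq
          refine (hlip _ _ _ _ _).trans ?_
          gcongr
      _ = _ := by rw [integral_const_mul, integral_add j1 j2, e1, e2]
  have hpos : 0 < Lc * (1 + Mb) := by positivity
  have n1 := cost_nonempty f₁ g₁
  have n2 := cost_nonempty f₂ g₂
  rw [← div_le_iff₀' hpos]
  have s2 : ∀ c₁ ∈ { c : ℝ | ∃ γ : Measure (Vec d × Vec d),
        γ.map Prod.fst = f₁ ∧ γ.map Prod.snd = g₁ ∧ c = ∫ p, ‖p.1 - p.2‖ ∂γ },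
      W1 (Qgain 𝒞 b f₁ f₂) (Qgain 𝒞 b g₁ g₂) / (Lc * (1 + Mb)) - c₁ ≤ W1 f₂ g₂ := by
    intro c₁ hc₁
    refine le_csInf n2 fun c₂ hc₂ => ?_
    have := (div_le_iff₀' hpos).2 (key c₁ hc₁ c₂ hc₂)
    linarith
  have s1 : W1 (Qgain 𝒞 b f₁ f₂) (Qgain 𝒞 b g₁ g₂) / (Lc * (1 + Mb)) - W1 f₂ g₂ ≤ W1 f₁ g₁ :=
    le_csInf n1 fun c₁ hc₁ => by linarith [s2 c₁ hc₁]
  linarith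

end
end

section
/- (Coupling lemma for the Nanbu method.) Let f be a probability measure on ℝ^d with finite first moment and let N ∈ ℕ, N ≥ 1. Then there exists a measurable map W*_f : (ℝ^d)^N × [0,N) → ℝ^d with the following property: for every v = (v¹,…,v^N) ∈ (ℝ^d)^N, if α is uniformly distributed on [0,N) and j(α) := ⌊α⌋ + 1, then the joint law of the pair (W*_f(v,α), v^{j(α)}) is an optimal transport plan (for the cost |x−y|) between f and the empirical measure μ_v := (1/N) Σ_{i=1}^N δ_{v^i}. In particular W*_f(v,α) has law f and v^{j(α)} has law μ_v, and E|W*_f(v,α) − v^{j(α)}| = W₁(f, μ_v). -/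
open MeasureTheory ProbabilityTheory Set
open scoped ENNReal

noncomputable section

theorem hilbert_select {H : Type*} [NormedAddCommGroup H] [InnerProductSpace ℝ H] [CompleteSpace H]
    {X : Type*} [TopologicalSpace X] [MeasurableSpace X] [OpensMeasurableSpace X]
    (K : Set H) (hne : K.Nonempty) (hcl : IsClosed K) (hcv : Convex ℝ K)
    (R : ℝ) (hR : ∀ h ∈ K, ‖h‖ ≤ R) (c : X → H) (hc : Continuous c) :
    ∃ m : X → H, (∀ y : H, Measurable fun x => inner ℝ y (m x)) ∧
      ∀ x, m x ∈ K ∧ ∀ h ∈ K, inner ℝ (c x) (m x) ≤ inner ℝ (c x) h := by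
  have hproj : ∀ u : H, ∃ p ∈ K, ∀ w ∈ K, inner ℝ (u - p) (w - p) ≤ 0 := by
    intro u
    obtain ⟨p, hp, hpe⟩ := exists_norm_eq_iInf_of_complete_convex hne hcl.isComplete hcv u
    exact ⟨p, hp, (norm_eq_iInf_iff_real_inner_le_zero hcv hp).1 hpe⟩
  choose P hPK hP using hproj
  have hPlip : LipschitzWith 1 P := by
    refine LipschitzWith.of_dist_le_mul fun u w => ?_
    rw [dist_eq_norm, dist_eq_norm, NNReal.coe_one, one_mul]
    have h1 := hP u (P w) (hPK w)
    have h2 := hP w (P u) (hPK u)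
    have h3 : ‖P u - P w‖ * ‖P u - P w‖ ≤ ‖u - w‖ * ‖P u - P w‖ := by
      refine le_trans ?_ (real_inner_le_norm (u - w) (P u - P w))
      rw [← real_inner_self_eq_norm_mul_norm]
      simp only [inner_sub_left, inner_sub_right] at *
      linarith
    rcases (norm_nonneg (P u - P w)).eq_or_lt with h | h
    · rw [← h]; positivity
    · exact le_of_mul_le_mul_right h3 h
  let T : ℕ → ℝ := fun n => (n : ℝ) + 1
  have hT : ∀ n, 0 < T n := fun n => by positivity
  let h : ℕ → X → H := fun n x => P (-(T n • c x))
  have hcont : ∀ n, Continuous (h n) := fun n => hPlip.continuous.comp (by fun_prop)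
  have hK : ∀ n x, h n x ∈ K := fun n x => hPK _
  have hvar : ∀ n x, ∀ w ∈ K,
      0 ≤ T n * inner ℝ (c x) (w - h n x) + inner ℝ (h n x) (w - h n x) := by
    intro n x w hw
    have := hP (-(T n • c x)) w hw
    change inner ℝ (-(T n • c x) - h n x) (w - h n x) ≤ 0 at this
    rw [inner_sub_left, inner_neg_left, real_inner_smul_left] at this
    linarith
  have hinc : ∀ x n m, n ≤ m → ‖h m x - h n x‖ ^ 2 ≤ ‖h m x‖ ^ 2 - ‖h n x‖ ^ 2 := by
    intro x n m hnm
    rcases hnm.eq_or_lt with rfl | hlt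
    · simp
    have h1 := hvar n x _ (hK m x)
    have h2 := hvar m x _ (hK n x)
    set a := h n x
    set b := h m x
    have hTT : T n < T m := by
      have : (n : ℝ) < m := by exact_mod_cast hlt
      simp only [T]; linarith
    have e1 : inner ℝ (c x) (a - b) = - inner ℝ (c x) (b - a) := by
      rw [← inner_neg_right, neg_sub]
    have e2 : inner ℝ b (a - b) = - (inner ℝ a (b - a) + ‖b - a‖ ^ 2) := by
      rw [← real_inner_self_eq_norm_sq]
      simp only [inner_sub_left, inner_sub_right]; ring
    have e3 : ‖b‖ ^ 2 = ‖a‖ ^ 2 + 2 * inner ℝ a (b - a) + ‖b - a‖ ^ 2 := by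
      rw [← norm_add_sq_real, add_sub_cancel]
    rw [e1, e2] at h2
    have h3 : 0 ≤ (T m - T n) * inner ℝ a (b - a) := by
      have := mul_nonneg (hT m).le h1
      have := mul_nonneg (hT n).le h2
      have := mul_nonneg (hT n).le (sq_nonneg ‖b - a‖)
      nlinarith
    have h4 : 0 ≤ inner ℝ a (b - a) := nonneg_of_mul_nonneg_right h3 (by linarith)
    linarith
  have hcau : ∀ x, CauchySeq fun n => h n x := by
    intro x
    have hmono : Monotone fun n => ‖h n x‖ ^ 2 := by
      intro n m hnm
      have := hinc x n m hnm
      have := sq_nonneg ‖h m x - h n x‖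
      show ‖h n x‖ ^ 2 ≤ ‖h m x‖ ^ 2
      linarith
    have hbdd : BddAbove (range fun n => ‖h n x‖ ^ 2) := by
      refine ⟨R ^ 2, ?_⟩
      rintro _ ⟨n, rfl⟩
      have := hR _ (hK n x)
      have := norm_nonneg (h n x)
      show ‖h n x‖ ^ 2 ≤ R ^ 2
      gcongr
    have hc' := (tendsto_atTop_ciSup hmono hbdd).cauchySeq
    rw [Metric.cauchySeq_iff'] at hc' ⊢
    intro ε hε
    obtain ⟨n0, hn0⟩ := hc' (ε ^ 2) (by positivity)
    refine ⟨n0, fun n hn => ?_⟩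
    have h1 := hn0 n hn
    have h2 := hinc x n0 n hn
    rw [Real.dist_eq] at h1
    rw [dist_eq_norm]
    refine lt_of_pow_lt_pow_left₀ 2 hε.le ?_
    exact lt_of_le_of_lt h2 (lt_of_le_of_lt (le_abs_self _) h1)
  choose m hm using fun x => cauchySeq_tendsto_of_complete (hcau x)
  refine ⟨m, fun y => ?_, fun x => ⟨?_, fun w hw => ?_⟩⟩
  · refine measurable_of_tendsto_metrizable (f := fun n x => inner ℝ y (h n x))
      (fun n => ?_) ?_
    · exact (continuous_const.inner (hcont n)).measurable
    · rw [tendsto_pi_nhds]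
      exact fun x => tendsto_const_nhds.inner (hm x)
  · exact hcl.mem_of_tendsto (hm x) (Filter.Eventually.of_forall fun n => hK n x)
  · have h1 : Filter.Tendsto (fun n => inner ℝ (c x) (w - h n x)
        + (1 / ((n : ℝ) + 1)) * inner ℝ (h n x) (w - h n x)) Filter.atTop
        (nhds (inner ℝ (c x) (w - m x) + 0 * inner ℝ (m x) (w - m x))) :=
      (tendsto_const_nhds.inner (tendsto_const_nhds.sub (hm x))).add
        (tendsto_one_div_add_atTop_nhds_zero_nat.mul
          ((hm x).inner (tendsto_const_nhds.sub (hm x))))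
    have h2 := ge_of_tendsto' h1 (b := 0) fun n => by
      have := hvar n x w hw
      have h3 := mul_nonneg (one_div_nonneg.2 (hT n).le) this
      rw [mul_add, ← mul_assoc, one_div_mul_cancel (hT n).ne', one_mul] at h3
      exact h3
    rw [zero_mul, add_zero, inner_sub_right] at h2
    linarith

section plans

set_option linter.unusedSectionVars false

variable {E : Type*} [NormedAddCommGroup E] [MeasurableSpace E] [BorelSpace E]
  [SecondCountableTopology E]

/-- The constant function `c` as an element of `L²(f)`. -/
def cstL (f : Measure E) [IsProbabilityMeasure f] (c : ℝ) : Lp ℝ 2 f :=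
  indicatorConstLp 2 MeasurableSet.univ (measure_ne_top f _) c

/-- Tuples of densities. -/
abbrev HH (N : ℕ) (f : Measure E) := PiLp 2 (fun _ : Fin N => Lp ℝ 2 f)

/-- Admissible tuples of densities. -/
def KK (N : ℕ) (f : Measure E) [IsProbabilityMeasure f] : Set (HH N f) :=
  {h | (∀ i, 0 ≤ h i) ∧ (∑ i, h i = cstL f N) ∧ ∀ i, inner ℝ (cstL f 1) (h i) = 1}

/-- Admissible families of probability measures. -/
def Good {N : ℕ} (f : Measure E) (ν : Fin N → Measure E) : Prop :=
  (∀ i, IsProbabilityMeasure (ν i)) ∧ ∑ i, ν i = (N : ℝ≥0∞) • f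

/-- The measures associated to densities. -/
def dens {N : ℕ} (f : Measure E) (h : HH N f) (i : Fin N) : Measure E :=
  f.withDensity fun x => ENNReal.ofReal (h i x)

/-- The (reduced) cost. -/
def costF (f : Measure E) [IsProbabilityMeasure f] (w : E) : Lp ℝ 2 f :=
  MemLp.toLp (fun x => ‖x - w‖ - ‖x‖) (MemLp.of_bound (p := 2) (μ := f)
    (by fun_prop) ‖w‖ (Filter.Eventually.of_forall fun x => by
      have := abs_norm_sub_norm_le (x - w) x
      simpa using this))

variable (f : Measure E) [IsProbabilityMeasure f] {N : ℕ}

theorem cstL_coe (c : ℝ) : ∀ᵐ x ∂f, cstL f c x = c := by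
  filter_upwards [indicatorConstLp_coeFn (p := 2) (μ := f) (hs := MeasurableSet.univ)
    (hμs := measure_ne_top f _) (c := c)] with x hx
  simp [cstL]

theorem costF_coe (w : E) : ∀ᵐ x ∂f, costF f w x = ‖x - w‖ - ‖x‖ := MemLp.coeFn_toLp _

theorem costF_cont : Continuous (costF f) := by
  refine LipschitzWith.continuous (K := 1) (LipschitzWith.of_dist_le_mul fun u w => ?_)
  rw [dist_eq_norm, dist_eq_norm, NNReal.coe_one, one_mul]
  refine (Lp.norm_le_of_ae_bound (norm_nonneg (u - w)) ?_).trans (by simp [measureUnivNNReal])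
  filter_upwards [costF_coe f u, costF_coe f w, Lp.coeFn_sub (costF f u) (costF f w)]
    with x h1 h2 h3
  rw [h3, Pi.sub_apply, h1, h2, sub_sub_sub_cancel_right]
  refine (abs_norm_sub_norm_le _ _).trans ?_
  rw [sub_sub_sub_cancel_left, norm_sub_rev]

theorem KK_closed : IsClosed (KK N f) := by
  have hi : ∀ i : Fin N, Continuous fun h : HH N f => h i := fun i =>
    PiLp.continuous_apply 2 _ i
  have hs : KK N f = (⋂ i : Fin N, {h : HH N f | 0 ≤ h i}) ∩ ({h : HH N f | ∑ i, h i = cstL f N} ∩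
      (⋂ i : Fin N, {h : HH N f | inner ℝ (cstL f 1) (h i) = 1})) := by
    ext h; simp [KK]
  rw [hs]
  refine IsClosed.inter ?_ (IsClosed.inter ?_ ?_)
  · exact isClosed_iInter fun i => isClosed_le continuous_const (hi i)
  · exact isClosed_eq (continuous_finsetSum _ fun i _ => hi i) continuous_const
  · exact isClosed_iInter fun i => isClosed_eq (continuous_const.inner (hi i)) continuous_const

theorem Lp_smul_nonneg {a : ℝ} (ha : 0 ≤ a) {g : Lp ℝ 2 f} (hg : 0 ≤ g) : 0 ≤ a • g := by
  rw [← Lp.coeFn_nonneg] at hg ⊢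
  filter_upwards [hg, Lp.coeFn_smul a g] with x h1 h2
  rw [h2]
  exact mul_nonneg ha h1

theorem KK_convex : Convex ℝ (KK N f) := by
  rintro h ⟨h1, h2, h3⟩ g ⟨g1, g2, g3⟩ a b ha hb hab
  refine ⟨fun i => ?_, ?_, fun i => ?_⟩
  · exact add_nonneg (Lp_smul_nonneg f ha (h1 i)) (Lp_smul_nonneg f hb (g1 i))
  · simp only [PiLp.add_apply, PiLp.smul_apply]
    rw [Finset.sum_add_distrib, ← Finset.smul_sum, ← Finset.smul_sum, h2, g2, ← add_smul, hab,
      one_smul]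
  · simp only [PiLp.add_apply, PiLp.smul_apply]
    rw [inner_add_right, real_inner_smul_right, real_inner_smul_right, h3, g3]
    linarith

variable {f}

theorem KK_nonneg {h : HH N f} (hh : h ∈ KK N f) (i : Fin N) : ∀ᵐ x ∂f, 0 ≤ h i x :=
  (Lp.coeFn_nonneg _).2 (hh.1 i)

theorem KK_sum {h : HH N f} (hh : h ∈ KK N f) : ∀ᵐ x ∂f, ∑ i, h i x = N := by
  filter_upwards [cstL_coe f N, Lp.coeFn_finsetSum Finset.univ fun i => h i] with x h1 h2
  rw [hh.2.1, h1] at h2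
  rw [h2, Finset.sum_apply]

theorem KK_le {h : HH N f} (hh : h ∈ KK N f) (i : Fin N) : ∀ᵐ x ∂f, ‖h i x‖ ≤ N := by
  filter_upwards [ae_all_iff.2 (KK_nonneg hh), KK_sum hh] with x h1 h2
  rw [Real.norm_of_nonneg (h1 i), ← h2]
  exact Finset.single_le_sum (f := fun i => h i x) (fun j _ => h1 j) (Finset.mem_univ i)

theorem Lp_int (g : Lp ℝ 2 f) : Integrable g f :=
  (Lp.memLp g).integrable (by norm_num)

theorem KK_int {h : HH N f} (hh : h ∈ KK N f) (i : Fin N) : ∫ x, h i x ∂f = 1 := by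
  have := hh.2.2 i
  rw [cstL, L2.inner_indicatorConstLp_one] at this
  simpa using this

theorem KK_bdd {h : HH N f} (hh : h ∈ KK N f) : ‖h‖ ≤ √(∑ _i : Fin N, (N : ℝ) ^ 2) := by
  apply Real.le_sqrt_of_sq_le
  rw [PiLp.norm_sq_eq_of_L2]
  refine Finset.sum_le_sum fun i _ => ?_
  gcongr
  refine (Lp.norm_le_of_ae_bound (Nat.cast_nonneg N) (KK_le hh i)).trans ?_
  simp [measureUnivNNReal]

theorem dens_apply {h : HH N f} (hh : h ∈ KK N f) (i : Fin N) {s : Set E}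
    (hs : MeasurableSet s) : dens f h i s = ENNReal.ofReal
      (inner ℝ (indicatorConstLp 2 hs (measure_ne_top f s) (1 : ℝ)) (h i)) := by
  rw [dens, withDensity_apply _ hs, L2.inner_indicatorConstLp_one,
    ofReal_integral_eq_lintegral_ofReal (Lp_int _).integrableOn
      (ae_restrict_of_ae (KK_nonneg hh i))]

theorem withDensity_fsum {ι : Type*} (s : Finset ι) (g : ι → E → ℝ≥0∞)
    (hg : ∀ i, Measurable (g i)) :
    ∑ i ∈ s, f.withDensity (g i) = f.withDensity (fun x => ∑ i ∈ s, g i x) := by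
  ext A hA
  rw [withDensity_apply _ hA, lintegral_finsetSum _ fun i _ => hg i, Measure.finsetSum_apply]
  exact Finset.sum_congr rfl fun i _ => withDensity_apply _ hA

theorem dens_good {h : HH N f} (hh : h ∈ KK N f) : Good f (dens f h) := by
  constructor
  · intro i
    constructor
    rw [dens, withDensity_apply _ MeasurableSet.univ, Measure.restrict_univ,
      ← ofReal_integral_eq_lintegral_ofReal (Lp_int _) (KK_nonneg hh i), KK_int hh]
    simp
  · unfold dens
    rw [withDensity_fsum _ _ fun i => (Lp.stronglyMeasurable _).measurable.ennreal_ofReal,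
      ← withDensity_const]
    apply withDensity_congr_ae
    filter_upwards [ae_all_iff.2 (KK_nonneg hh), KK_sum hh] with x h1 h2
    rw [← ENNReal.ofReal_sum_of_nonneg fun i _ => h1 i, h2, ENNReal.ofReal_natCast]

theorem good_dens {ν : Fin N → Measure E} (hν : Good f ν) :
    ∃ h ∈ KK N f, ∀ i, dens f h i = ν i := by
  have := hν.1
  have hac : ∀ i, ν i ≪ f := by
    intro i s hs
    have h1 : (∑ i, ν i) s = 0 := by rw [hν.2]; simp [hs]
    rw [Measure.finsetSum_apply] at h1
    exact (Finset.sum_eq_zero_iff.1 h1) i (Finset.mem_univ i)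
  have hwd : ∀ i, f.withDensity ((ν i).rnDeriv f) = ν i := fun i =>
    Measure.withDensity_rnDeriv_eq _ _ (hac i)
  have hsum : ∀ᵐ x ∂f, ∑ i, (ν i).rnDeriv f x = N := by
    refine (withDensity_eq_iff_of_sigmaFinite (μ := f) (g := fun _ => (N : ℝ≥0∞))
      (Finset.measurable_fun_sum _ fun i _ => Measure.measurable_rnDeriv _ _).aemeasurable
      aemeasurable_const).1 ?_
    rw [withDensity_const, ← hν.2, ← withDensity_fsum _ _ fun i => Measure.measurable_rnDeriv _ _]
    exact Finset.sum_congr rfl fun i _ => hwd i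
  have hle : ∀ i, ∀ᵐ x ∂f, (ν i).rnDeriv f x ≤ N := by
    intro i
    filter_upwards [hsum] with x hx
    rw [← hx]
    exact Finset.single_le_sum (f := fun i => (ν i).rnDeriv f x) (fun j _ => zero_le)
      (Finset.mem_univ i)
  have hmem : ∀ i, MemLp (fun x => ((ν i).rnDeriv f x).toReal) 2 f := by
    intro i
    refine MemLp.of_bound (Measure.measurable_rnDeriv _ _).ennreal_toReal.aestronglyMeasurable N ?_
    filter_upwards [hle i] with x hx
    rw [Real.norm_of_nonneg ENNReal.toReal_nonneg]
    exact ENNReal.toReal_le_of_le_ofReal (by positivity) (by simpa using hx)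
  let h : HH N f := WithLp.toLp 2 fun i => (hmem i).toLp
  have hco : ∀ i, ∀ᵐ x ∂f, h i x = ((ν i).rnDeriv f x).toReal := fun i => (hmem i).coeFn_toLp
  refine ⟨h, ⟨fun i => ?_, ?_, fun i => ?_⟩, fun i => ?_⟩
  · rw [← Lp.coeFn_nonneg]
    filter_upwards [hco i] with x hx
    rw [hx]; exact ENNReal.toReal_nonneg
  · apply Lp.ext
    filter_upwards [ae_all_iff.2 hco, hsum, ae_all_iff.2 hle, cstL_coe f N,
      Lp.coeFn_finsetSum Finset.univ fun i => h i] with x h1 h2 h3 h4 h5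
    rw [h5, h4, Finset.sum_apply]
    simp_rw [h1]
    rw [← ENNReal.toReal_sum fun i _ => ((h3 i).trans_lt (ENNReal.natCast_lt_top N)).ne, h2]
    simp
  · rw [cstL, L2.inner_indicatorConstLp_one, Measure.restrict_univ, integral_congr_ae (hco i),
      Measure.integral_toReal_rnDeriv (hac i)]
    simp
  · rw [← hwd i, dens]
    apply withDensity_congr_ae
    filter_upwards [hco i, hle i] with x h1 h2
    rw [h1, ENNReal.ofReal_toReal (h2.trans_lt (ENNReal.natCast_lt_top N)).ne]

/-- cost vector -/
def costV (f : Measure E) [IsProbabilityMeasure f] (v : Fin N → E) : HH N f :=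
  WithLp.toLp 2 fun i => costF f (v i)

theorem costV_cont : Continuous (costV (N := N) f) :=
  (PiLp.continuous_toLp 2 _).comp
    (continuous_pi fun i => (costF_cont f).comp (continuous_apply i))

theorem dens_cost (hf : Integrable (fun x => ‖x‖) f) {h : HH N f} (hh : h ∈ KK N f)
    (v : Fin N → E) :
    ∑ i, ∫ x, ‖x - v i‖ ∂(dens f h i) = inner ℝ (costV f v) h + N * ∫ x, ‖x‖ ∂f := by
  have h1 : ∀ i, ∫ x, ‖x - v i‖ ∂(dens f h i)
      = inner ℝ (costF f (v i)) (h i) + ∫ x, h i x * ‖x‖ ∂f := by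
    intro i
    rw [dens, integral_withDensity_eq_integral_toReal_smul
      (Lp.stronglyMeasurable _).measurable.ennreal_ofReal
      (Filter.Eventually.of_forall fun x => ENNReal.ofReal_lt_top), L2.inner_def,
      ← integral_add (L2.integrable_inner _ _)
        (hf.bdd_mul (Lp.aestronglyMeasurable _) (KK_le hh i))]
    apply integral_congr_ae
    filter_upwards [costF_coe f (v i), KK_nonneg hh i] with x h1 h2
    rw [ENNReal.toReal_ofReal h2, h1]
    simp
    ring
  simp_rw [h1]
  rw [Finset.sum_add_distrib, PiLp.inner_apply, ← integral_finsetSum _ fun i _ =>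
    (hf.bdd_mul (Lp.aestronglyMeasurable _) (KK_le hh i)), ← integral_const_mul]
  congr 1
  apply integral_congr_ae
  filter_upwards [KK_sum hh] with x hx
  rw [← Finset.sum_mul, hx]

theorem exists_opt [NeZero N] (hf : Integrable (fun x => ‖x‖) f) :
    ∃ ν : (Fin N → E) → Fin N → Measure E, (∀ i, Measurable fun v => ν v i) ∧
      ∀ v, Good f (ν v) ∧ ∀ ν', Good f ν' →
        ∑ i, ∫ x, ‖x - v i‖ ∂(ν v i) ≤ ∑ i, ∫ x, ‖x - v i‖ ∂(ν' i) := by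
  have hne : (KK N f).Nonempty := by
    obtain ⟨h, hh, -⟩ := good_dens (f := f) (N := N) (ν := fun _ => f)
      ⟨fun _ => inferInstance, by simp [← Nat.cast_smul_eq_nsmul ℝ≥0∞]⟩
    exact ⟨h, hh⟩
  obtain ⟨m, hm, hopt⟩ := hilbert_select (X := Fin N → E) (KK N f) hne (KK_closed f) (KK_convex f) _
    (fun h hh => KK_bdd hh) (costV f) costV_cont
  refine ⟨fun v => dens f (m v), fun i => ?_, fun v => ⟨dens_good (hopt v).1, fun ν' hν' => ?_⟩⟩
  · refine Measure.measurable_of_measurable_coe _ fun s hs => ?_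
    have h1 : (fun v => dens f (m v) i s) = fun v => ENNReal.ofReal (inner ℝ (WithLp.toLp 2
        (Pi.single i (indicatorConstLp 2 hs (measure_ne_top f s) (1 : ℝ))) : HH N f) (m v)) := by
      ext v
      rw [dens_apply (hopt v).1 i hs, PiLp.inner_apply, Finset.sum_eq_single i]
      · simp
      · intro j _ hj
        simp [Pi.single_eq_of_ne hj]
      · simp
    rw [h1]
    exact (hm _).ennreal_ofReal
  · obtain ⟨h', hh', hd⟩ := good_dens hν'
    simp_rw [← hd]
    rw [dens_cost hf (hopt v).1, dens_cost hf hh']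
    have := (hopt v).2 h' hh'
    linarith

end plans

/-- The plan associated to a family of measures. -/
def planM {d N : ℕ} (v : Fin N → Vec d) (ν : Fin N → Measure (Vec d)) :
    Measure (Vec d × Vec d) :=
  ((N : ℝ≥0∞))⁻¹ • ∑ i, (ν i).map fun x => (x, v i)

theorem N_inv_mul (N : ℕ) [NeZero N] : ((N : ℝ≥0∞))⁻¹ * N = 1 :=
  ENNReal.inv_mul_cancel (by exact_mod_cast NeZero.ne N) (ENNReal.natCast_ne_top N)

theorem map_fsum {α β ι : Type*} [MeasurableSpace α] [MeasurableSpace β] (s : Finset ι)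
    (μ : ι → Measure α) {g : α → β} (hg : Measurable g) :
    (∑ i ∈ s, μ i).map g = ∑ i ∈ s, (μ i).map g := by
  ext A hA
  rw [Measure.map_apply hg hA, Measure.finsetSum_apply, Measure.finsetSum_apply]
  exact Finset.sum_congr rfl fun i _ => (Measure.map_apply hg hA).symm

section final

set_option linter.unusedSectionVars false

variable {d N : ℕ} [NeZero N] {f : Measure (Vec d)} [IsProbabilityMeasure f]

theorem planM_fst (v : Fin N → Vec d) (ν : Fin N → Measure (Vec d)) :
    (planM v ν).map Prod.fst = ((N : ℝ≥0∞))⁻¹ • ∑ i, ν i := by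
  rw [planM, Measure.map_smul, map_fsum _ _ measurable_fst]
  congr 1
  refine Finset.sum_congr rfl fun i _ => ?_
  rw [Measure.map_map measurable_fst (by fun_prop)]
  exact Measure.map_id

theorem planM_snd (v : Fin N → Vec d) (ν : Fin N → Measure (Vec d))
    (hν : ∀ i, IsProbabilityMeasure (ν i)) :
    (planM v ν).map Prod.snd = empMeas v := by
  rw [planM, Measure.map_smul, map_fsum _ _ measurable_snd, empMeas]
  congr 1
  refine Finset.sum_congr rfl fun i _ => ?_
  rw [Measure.map_map measurable_snd (by fun_prop)]
  have : (Prod.snd ∘ fun x : Vec d => (x, v i)) = fun _ => v i := rfl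
  rw [this, Measure.map_const]
  simp

theorem planM_cost (hf : Integrable (fun x : Vec d => ‖x‖) f) (v : Fin N → Vec d)
    (ν : Fin N → Measure (Vec d)) (hν : Good f ν) :
    ∫ p, ‖p.1 - p.2‖ ∂(planM v ν) = (N : ℝ)⁻¹ * ∑ i, ∫ x, ‖x - v i‖ ∂(ν i) := by
  have hi : ∀ i, Integrable (fun x : Vec d => ‖x - v i‖) (ν i) := by
    intro i
    have h1 : Integrable (fun x : Vec d => ‖x - v i‖) f := by
      have hid : Integrable (fun x : Vec d => x) f :=
        (integrable_norm_iff (by fun_prop)).1 hf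
      exact (hid.sub (integrable_const (v i))).norm
    have h2 := h1.smul_measure (c := (N : ℝ≥0∞)) (ENNReal.natCast_ne_top N)
    refine h2.mono_measure ?_
    rw [← hν.2]
    exact Finset.single_le_sum (f := ν) (fun j _ => Measure.zero_le _) (Finset.mem_univ i)
  have hm : ∀ i, Measurable fun x : Vec d => (x, v i) := fun i => by fun_prop
  have hc : Continuous fun p : Vec d × Vec d => ‖p.1 - p.2‖ := by fun_prop
  rw [planM, integral_smul_measure, integral_finsetSum_measure]
  · simp only [ENNReal.toReal_inv, ENNReal.toReal_natCast, smul_eq_mul]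
    congr 1
    refine Finset.sum_congr rfl fun i _ => ?_
    rw [integral_map (hm i).aemeasurable hc.aestronglyMeasurable]
  · intro i _
    rw [integrable_map_measure hc.aestronglyMeasurable (hm i).aemeasurable]
    exact hi i

theorem coupling_planM (v : Fin N → Vec d) (γ : Measure (Vec d × Vec d))
    (h1 : γ.map Prod.fst = f) (h2 : γ.map Prod.snd = empMeas v) :
    ∃ ν : Fin N → Measure (Vec d), Good f ν ∧ γ = planM v ν := by
  have hγ : IsProbabilityMeasure γ := by
    constructor
    have : (γ.map Prod.fst) univ = 1 := by rw [h1]; simp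
    rwa [Measure.map_apply measurable_fst MeasurableSet.univ, preimage_univ] at this
  let ρ := γ.map Prod.swap
  have hρ : IsProbabilityMeasure ρ := Measure.isProbabilityMeasure_map (by fun_prop)
  have hρf : ρ.fst = empMeas v := by
    rw [← h2, Measure.fst, Measure.map_map measurable_fst measurable_swap]; rfl
  have hd : ρ.fst ⊗ₘ ρ.condKernel = ρ := ρ.disintegrate ρ.condKernel
  let ν : Fin N → Measure (Vec d) := fun i => ρ.condKernel (v i)
  have hp : ∀ i, IsProbabilityMeasure (ν i) := fun i => by
    show IsProbabilityMeasure (ρ.condKernel (v i)); infer_instance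
  have hγρ : γ = ρ.map Prod.swap := by
    rw [Measure.map_map measurable_swap measurable_swap]
    simp
  have hpl : γ = planM v ν := by
    ext s hs
    have hs' : MeasurableSet (Prod.swap ⁻¹' s) := measurable_swap hs
    have hmm := Kernel.measurable_kernel_prodMk_left (κ := ρ.condKernel) hs'
    conv_lhs => rw [hγρ, Measure.map_apply measurable_swap hs, ← hd, hρf]
    have : SFinite (empMeas v) := by rw [← hρf]; infer_instance
    rw [Measure.compProd_apply hs', empMeas, lintegral_smul_measure, lintegral_finsetSum_measure,
      planM, Measure.smul_apply, Measure.finsetSum_apply]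
    congr 1
    refine Finset.sum_congr rfl fun i _ => ?_
    rw [lintegral_dirac' _ hmm, Measure.map_apply (by fun_prop) hs]
    rfl
  refine ⟨ν, ⟨hp, ?_⟩, hpl⟩
  rw [← h1, hpl, planM_fst, smul_smul, mul_comm, N_inv_mul, one_smul]

theorem jIdx_meas : Measurable (jIdx N) := by
  have : Measurable fun z : ℤ => (⟨z.toNat % N, Nat.mod_lt _ (Nat.pos_of_ne_zero (NeZero.ne N))⟩ :
    Fin N) := measurable_from_top
  exact this.comp Int.measurable_floor

theorem unif_eq : unifIco N = ((N : ℝ≥0∞))⁻¹ •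
    ∑ i : Fin N, (volume : Measure unitInterval).map (fun u : unitInterval => (u : ℝ) + (i : ℕ)) := by
  rw [unifIco]
  congr 1
  have hU : Ico (0 : ℝ) N = ⋃ i : Fin N, Ico ((i : ℕ) : ℝ) ((i : ℕ) + 1) := by
    ext x
    simp only [mem_Ico, mem_iUnion]
    constructor
    · rintro ⟨h0, h1⟩
      exact ⟨⟨⌊x⌋₊, (Nat.floor_lt h0).2 h1⟩, Nat.floor_le h0, Nat.lt_floor_add_one x⟩
    · rintro ⟨i, h0, h1⟩
      have : ((i : ℕ) : ℝ) + 1 ≤ N := by exact_mod_cast i.2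
      exact ⟨(Nat.cast_nonneg _).trans h0, by linarith⟩
  have hdis : Pairwise (Function.onFun Disjoint
      fun i : Fin N => Ico ((i : ℕ) : ℝ) ((i : ℕ) + 1)) := by
    intro i j hij
    rw [Function.onFun, Set.disjoint_left]
    rintro x ⟨h0, h1⟩ ⟨h2, h3⟩
    apply hij
    have a1 : ((i : ℕ) : ℝ) < (j : ℕ) + 1 := by linarith
    have a2 : ((j : ℕ) : ℝ) < (i : ℕ) + 1 := by linarith
    have a3 : (i : ℕ) < (j : ℕ) + 1 := by exact_mod_cast a1
    have a4 : (j : ℕ) < (i : ℕ) + 1 := by exact_mod_cast a2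
    exact Fin.ext (by omega)
  rw [hU, Measure.restrict_iUnion hdis fun i => measurableSet_Ico, Measure.sum_fintype]
  refine Finset.sum_congr rfl fun i _ => ?_
  have e1 := unitInterval.measurePreserving_coe.map_eq
  have e2 := ((measurePreserving_add_right (volume : Measure ℝ) ((i : ℕ) : ℝ)).restrict_preimage
    (s := Icc ((i : ℕ) : ℝ) ((i : ℕ) + 1)) measurableSet_Icc).map_eq
  have e3 : (fun x : ℝ => x + ((i : ℕ) : ℝ)) ⁻¹' Icc ((i : ℕ) : ℝ) ((i : ℕ) + 1)
      = unitInterval := by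
    ext x
    simp only [mem_preimage, mem_Icc, unitInterval]
    constructor <;> rintro ⟨h0, h1⟩ <;> constructor <;> linarith
  rw [e3, ← e1, Measure.map_map (by fun_prop) (by fun_prop)] at e2
  rw [Measure.restrict_congr_set Ico_ae_eq_Icc, ← e2]
  rfl

theorem law_eq (v : Fin N → Vec d) (ν : Fin N → Measure (Vec d))
    (g : Fin N → unitInterval → Vec d) (hg : Measurable (Function.uncurry g))
    (hgν : ∀ i, (volume : Measure unitInterval).map (g i) = ν i) :
    Measure.map (fun α : ℝ => (g (jIdx N α) ⟨Int.fract α, Int.fract_nonneg α,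
      (Int.fract_lt_one α).le⟩, v (jIdx N α))) (unifIco N) = planM v ν := by
  have hgi : ∀ i, Measurable (g i) := fun i => hg.of_uncurry_left
  have hF : Measurable (fun α : ℝ => (g (jIdx N α) ⟨Int.fract α, Int.fract_nonneg α,
      (Int.fract_lt_one α).le⟩, v (jIdx N α))) := by
    refine Measurable.prodMk ?_ ?_
    · exact hg.comp (jIdx_meas.prodMk (measurable_fract.subtype_mk))
    · exact (measurable_of_finite v).comp jIdx_meas
  rw [unif_eq, Measure.map_smul, map_fsum _ _ hF, planM]
  congr 1
  refine Finset.sum_congr rfl fun i _ => ?_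
  rw [Measure.map_map hF (by fun_prop), ← hgν i, Measure.map_map (by fun_prop) (hgi i)]
  apply Measure.map_congr
  have hne : ∀ᵐ u : unitInterval, u ≠ 1 := by
    rw [ae_iff]; simp
  filter_upwards [hne] with u hu
  have hu1 : (u : ℝ) < 1 := lt_of_le_of_ne u.2.2 fun h => hu (Subtype.ext h)
  have hfl : ⌊(u : ℝ) + ((i : ℕ) : ℝ)⌋ = (i : ℕ) := by
    rw [Int.floor_eq_iff]
    have := u.2.1
    push_cast
    constructor <;> linarith
  have hj : jIdx N ((u : ℝ) + ((i : ℕ) : ℝ)) = i := by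
    apply Fin.ext
    simp only [jIdx]
    rw [hfl, Int.toNat_natCast, Nat.mod_eq_of_lt i.2]
  have hfr : Int.fract ((u : ℝ) + ((i : ℕ) : ℝ)) = u := by
    rw [Int.fract, hfl]; push_cast; ring
  simp only [Function.comp, hj, hfr]

end final

/-- coupling lemma for the Nanbu method.  There is a measurable map
`W*_f` such that for every configuration `v`, if `α` is uniform on `[0,N)` then
`(W*_f(v,α), v^{j(α)})` is an optimal transport plan between `f` and the
empirical measure `μ_v`. -/
theorem nanbu_coupling_lemma (d N : ℕ) [NeZero N]
    (f : Measure (Vec d)) [IsProbabilityMeasure f]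
    (hf : Integrable (fun v : Vec d => ‖v‖) f) :
    ∃ Wstar : (Fin N → Vec d) × ℝ → Vec d, Measurable Wstar ∧
      ∀ v : Fin N → Vec d,
        (Measure.map (fun α : ℝ => (Wstar (v, α), v (jIdx N α))) (unifIco N)).map
            Prod.fst = f ∧
        (Measure.map (fun α : ℝ => (Wstar (v, α), v (jIdx N α))) (unifIco N)).map
            Prod.snd = empMeas v ∧
        (∫ p, ‖p.1 - p.2‖
            ∂(Measure.map (fun α : ℝ => (Wstar (v, α), v (jIdx N α))) (unifIco N)))
          = W1 f (empMeas v) := by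
  obtain ⟨ν, hνm, hν⟩ := exists_opt (N := N) hf
  let κ : Kernel ((Fin N → Vec d) × Fin N) (Vec d) :=
    ⟨fun p => ν p.1 p.2, measurable_from_prod_countable_left fun i => hνm i⟩
  have hκ : IsMarkovKernel κ := ⟨fun p => (hν p.1).1.1 p.2⟩
  obtain ⟨g, hg, hgκ⟩ := κ.exists_measurable_map_eq_unitInterval
  refine ⟨fun p => g (p.1, jIdx N p.2) ⟨Int.fract p.2, Int.fract_nonneg p.2,
      (Int.fract_lt_one p.2).le⟩, ?_, fun v => ?_⟩
  · exact hg.comp ((measurable_fst.prodMk (jIdx_meas.comp measurable_snd)).prodMk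
      (measurable_fract.comp measurable_snd).subtype_mk)
  have hg' : Measurable (Function.uncurry fun (i : Fin N) u => g (v, i) u) :=
    hg.comp (f := fun q : Fin N × unitInterval => ((v, q.1), q.2)) (by fun_prop)
  have hlaw := law_eq v (ν v) (fun i u => g (v, i) u) hg' fun i => hgκ (v, i)
  simp only at hlaw ⊢
  rw [hlaw]
  have hG := (hν v).1
  have hfst : (planM v (ν v)).map Prod.fst = f := by
    rw [planM_fst, hG.2, smul_smul, N_inv_mul, one_smul]
  have hsnd := planM_snd v (ν v) hG.1
  refine ⟨hfst, hsnd, ?_⟩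
  have hleast : IsLeast { c : ℝ | ∃ γ : Measure (Vec d × Vec d),
      γ.map Prod.fst = f ∧ γ.map Prod.snd = empMeas v ∧ c = ∫ p, ‖p.1 - p.2‖ ∂γ }
      (∫ p, ‖p.1 - p.2‖ ∂(planM v (ν v))) := by
    refine ⟨⟨_, hfst, hsnd, rfl⟩, ?_⟩
    rintro c ⟨γ, h1, h2, rfl⟩
    obtain ⟨ν', hν', rfl⟩ := coupling_planM v γ h1 h2
    rw [planM_cost hf v _ hG, planM_cost hf v _ hν']
    exact mul_le_mul_of_nonneg_left ((hν v).2 ν' hν') (by positivity)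
  exact hleast.csInf_eq.symm

end
end

section
/- (One-step coupling estimate for the Nanbu scheme.) Let b be a probability measure on Θ with bounded support and 𝒞 satisfy the Lipschitz condition |𝒞(v,v*,θ) − 𝒞(w,w*,θ)| ≤ L_𝒞 (1+|θ|)(|v−w| + |v*−w*|). Fix N, Δt ∈ (0,1], a probability measure f_n with finite first moment, and random vectors V_n = (V_n^1,…,V_n^N), W_n = (W_n^1,…,W_n^N) defined on a common probability space. Let, for each i, τ_n^i ∼ Bernoulli(Δt), α_n^i uniform on [0,N), θ_n^i ∼ b, all independent of each other and of (V_n, W_n), and let W*_{f_n} be the measurable map from the coupling lemma, so that conditionally on V_n the pair (W*_{f_n}(V_n, α_n^i), V_n^{j(α_n^i)}) is an optimal coupling between f_n and the empirical measure f_n^N := (1/N)Σ_i δ_{V_n^i}. Define V_{n+1}^i = (1−τ_n^i) V_n^i + τ_n^i 𝒞(V_n^i, V_n^{j(α_n^i)}, θ_n^i) and W_{n+1}^i = (1−τ_n^i) W_n^i + τ_n^i 𝒞(W_n^i, W*_{f_n}(V_n, α_n^i), θ_n^i). Then there exist constants C₁, C₂ > 0 depending only on L_𝒞 and M_∞(b)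 such that for each i, E|V_{n+1}^i − W_{n+1}^i| ≤ (1 + Δt C₁) E|V_n^i − W_n^i| + Δt C₂ E[W₁(f_n^N, f_n)]. -/
open MeasureTheory ProbabilityTheory Set
open scoped ENNReal

noncomputable section

theorem W1_symm' {E : Type*} [MeasurableSpace E] [NormedAddCommGroup E]
    (μ ν : Measure E) : W1 μ ν = W1 ν μ := by
  have key : ∀ μ ν : Measure E, { c : ℝ | ∃ γ : Measure (E × E),
    γ.map Prod.fst = μ ∧ γ.map Prod.snd = ν ∧ c = ∫ p, ‖p.1 - p.2‖ ∂γ } ⊆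
    { c : ℝ | ∃ γ : Measure (E × E),
    γ.map Prod.fst = ν ∧ γ.map Prod.snd = μ ∧ c = ∫ p, ‖p.1 - p.2‖ ∂γ } := by
    rintro μ ν c ⟨γ, h1, h2, h3⟩
    refine ⟨γ.map Prod.swap, ?_, ?_, ?_⟩
    · rw [Measure.map_map measurable_fst measurable_swap]; exact h2
    · rw [Measure.map_map measurable_snd measurable_swap]; exact h1
    · rw [h3]
      have := (MeasurableEquiv.prodComm (α := E) (β := E)).measurableEmbedding.integral_map
        (μ := γ) (fun p : E × E => ‖p.1 - p.2‖)
      have h : ⇑(MeasurableEquiv.prodComm (α := E) (β := E)) = Prod.swap := rfl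
      rw [h] at this
      rw [this]
      simp [norm_sub_rev]
  unfold W1
  rw [(key μ ν).antisymm (key ν μ)]

theorem measurable_jIdx' (N : ℕ) [NeZero N] : Measurable (jIdx N) := by
  have h : jIdx N = (fun z : ℤ => (⟨z.toNat % N,
      Nat.mod_lt _ (Nat.pos_of_ne_zero (NeZero.ne N))⟩ : Fin N)) ∘ (fun α : ℝ => ⌊α⌋) := rfl
  rw [h]
  exact (measurable_of_countable _).comp Int.measurable_floor

theorem measurable_eval_jIdx' {E : Type*} [MeasurableSpace E] (N : ℕ) [NeZero N] :
    Measurable (fun p : (Fin N → E) × ℝ => p.1 (jIdx N p.2)) := by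
  have h : Measurable (fun q : (Fin N → E) × Fin N => q.1 q.2) :=
    measurable_from_prod_countable_left fun j => measurable_pi_apply j
  exact h.comp (measurable_fst.prodMk ((measurable_jIdx' N).comp measurable_snd))

theorem isProb_unif' (N : ℕ) [NeZero N] : IsProbabilityMeasure (unifIco N) := by
  constructor
  have : (N : ℝ≥0∞) ≠ 0 := by exact_mod_cast NeZero.ne N
  simp [unifIco, ENNReal.inv_mul_cancel this]

theorem isProb_bern' {p : ℝ} (hp : p ∈ Set.Ioc (0:ℝ) 1) : IsProbabilityMeasure (bern p) := by
  constructor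
  simp only [bern, Measure.coe_add, Measure.coe_smul, Pi.add_apply, Pi.smul_apply, measure_univ,
    smul_eq_mul, mul_one]
  rw [← ENNReal.ofReal_add (by linarith [hp.2]) hp.1.le]
  simp

theorem cost_eq' {d N : ℕ} [NeZero N] (fn : Measure (Vec d))
    (hfn : Integrable (fun v : Vec d => ‖v‖) fn)
    (Wstar : (Fin N → Vec d) × ℝ → Vec d) (hW : Measurable Wstar) (v : Fin N → Vec d)
    (h1 : (Measure.map (fun α : ℝ => (Wstar (v, α), v (jIdx N α))) (unifIco N)).map
              Prod.fst = fn)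
    (h2 : (Measure.map (fun α : ℝ => (Wstar (v, α), v (jIdx N α))) (unifIco N)).map
              Prod.snd = empMeas v)
    (h3 : (∫ p, ‖p.1 - p.2‖
              ∂(Measure.map (fun α : ℝ => (Wstar (v, α), v (jIdx N α))) (unifIco N)))
            = W1 fn (empMeas v)) :
    ∫⁻ α, ‖v (jIdx N α) - Wstar (v, α)‖ₑ ∂(unifIco N)
      = ENNReal.ofReal (W1 (empMeas v) fn) := by
  have hN : (N : ℝ≥0∞) ≠ 0 := by exact_mod_cast NeZero.ne N
  have hm : Measurable (fun α : ℝ => (Wstar (v, α), v (jIdx N α))) := by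
    refine (hW.comp (measurable_const.prodMk measurable_id)).prodMk ?_
    exact (measurable_of_countable v).comp (measurable_jIdx' N)
  set π := Measure.map (fun α : ℝ => (Wstar (v, α), v (jIdx N α))) (unifIco N) with hπ
  have i1 : Integrable (fun p : Vec d × Vec d => p.1) π := by
    have : Integrable (fun v : Vec d => v) (π.map Prod.fst) := by
      rw [h1]; exact (integrable_norm_iff (by fun_prop)).1 hfn
    exact this.comp_measurable measurable_fst
  have i2 : Integrable (fun p : Vec d × Vec d => p.2) π := by
    have : Integrable (fun v : Vec d => v) (π.map Prod.snd) := by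
      rw [h2]
      unfold empMeas
      refine Integrable.smul_measure ?_ (by simp [hN])
      rw [integrable_finsetSum_measure]
      intro i _
      exact integrable_dirac (by simp)
    exact this.comp_measurable measurable_snd
  have i3 : Integrable (fun p : Vec d × Vec d => ‖p.1 - p.2‖) π := (i1.sub i2).norm
  rw [W1_symm', ← h3, ofReal_integral_eq_lintegral_ofReal i3 (ae_of_all _ fun _ => norm_nonneg _),
    hπ, lintegral_map (by fun_prop) hm]
  refine lintegral_congr fun α => ?_
  simp [norm_sub_rev]

set_option maxHeartbeats 1000000 in
/-- one-step coupling estimate for the Nanbu scheme. -/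
theorem nanbu_one_step_coupling (Lc Mb : ℝ) (hLc : 0 < Lc) (hMb : 0 ≤ Mb) :
    ∃ C₁ > (0:ℝ), ∃ C₂ > (0:ℝ),
      ∀ (d m N : ℕ) [NeZero N]
        (b : Measure (Vec m)), IsProbabilityMeasure b →
        (∀ᵐ θ ∂b, ‖θ‖ ≤ Mb) →
      ∀ (𝒞 : Vec d → Vec d → Vec m → Vec d),
        Measurable (fun p : (Vec d × Vec d) × Vec m => 𝒞 p.1.1 p.1.2 p.2) →
        (∀ v vs w ws θ,
          ‖𝒞 v vs θ - 𝒞 w ws θ‖ ≤ Lc * (1 + ‖θ‖) * (‖v - w‖ + ‖vs - ws‖)) →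
      ∀ (Δt : ℝ), Δt ∈ Set.Ioc (0:ℝ) 1 →
      ∀ (fn : Measure (Vec d)), IsProbabilityMeasure fn →
        Integrable (fun v : Vec d => ‖v‖) fn →
      ∀ (Ω : Type) [MeasureSpace Ω] [IsProbabilityMeasure (ℙ : Measure Ω)]
        (V W : Fin N → Ω → Vec d) (U : Fin N → Ω → ℝ × ℝ × Vec m)
        (Wstar : (Fin N → Vec d) × ℝ → Vec d),
        (∀ i, Measurable (V i)) → (∀ i, Measurable (W i)) →
        (∀ i, Measurable (U i)) → Measurable Wstar →
        -- the auxiliary variables (τ_n^i, α_n^i, θ_n^i), i = 1,…,N, are mutually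
        -- independent with the prescribed laws, and independent of (V_n, W_n):
        (Measure.map (fun ω => fun i : Fin N => U i ω) ℙ
          = Measure.pi fun _ : Fin N => (bern Δt).prod ((unifIco N).prod b)) →
        IndepFun (fun ω => fun i : Fin N => U i ω)
          (fun ω => fun i : Fin N => (V i ω, W i ω)) ℙ →
        -- W*_{f_n} is the map from the coupling lemma:
        (∀ v : Fin N → Vec d,
          (Measure.map (fun α : ℝ => (Wstar (v, α), v (jIdx N α))) (unifIco N)).map
              Prod.fst = fn ∧
          (Measure.map (fun α : ℝ => (Wstar (v, α), v (jIdx N α))) (unifIco N)).map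
              Prod.snd = empMeas v ∧
          (∫ p, ‖p.1 - p.2‖
              ∂(Measure.map (fun α : ℝ => (Wstar (v, α), v (jIdx N α))) (unifIco N)))
            = W1 fn (empMeas v)) →
        -- finite first moments of the coupled systems:
        (∀ i, Integrable (fun ω => ‖V i ω - W i ω‖) ℙ) →
        Integrable (fun ω => W1 (empMeas fun j => V j ω) fn) ℙ →
      ∀ i : Fin N,
        (∫ ω, ‖((1 - (U i ω).1) • V i ω +
                  (U i ω).1 • 𝒞 (V i ω) (V (jIdx N (U i ω).2.1) ω) (U i ω).2.2) -
                ((1 - (U i ω).1) • W i ω +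
                  (U i ω).1 • 𝒞 (W i ω) (Wstar (fun j => V j ω, (U i ω).2.1))
                    (U i ω).2.2)‖ ∂ℙ)
          ≤ (1 + Δt * C₁) * (∫ ω, ‖V i ω - W i ω‖ ∂ℙ) +
            Δt * C₂ * ∫ ω, W1 (empMeas fun j => V j ω) fn ∂ℙ := by
  have hK : 0 < Lc * (1 + Mb) := by positivity
  refine ⟨Lc * (1 + Mb), hK, Lc * (1 + Mb), hK, ?_⟩
  set K := Lc * (1 + Mb) with hKdef
  intro d m N _ b hb hbM 𝒞 h𝒞 hLip Δt hΔt fn hfnP hfn Ω _ _ V W U Wstar hV hW hU hWs hUlaw hind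
    hcoup hVW hW1 i
  have := isProb_unif' N
  have := isProb_bern' hΔt
  let H : (ℝ × ℝ × Vec m) × (Fin N → Vec d × Vec d) → Vec d := fun q =>
    ((1 - q.1.1) • (q.2 i).1 +
        q.1.1 • 𝒞 (q.2 i).1 (q.2 (jIdx N q.1.2.1)).1 q.1.2.2) -
      ((1 - q.1.1) • (q.2 i).2 +
        q.1.1 • 𝒞 (q.2 i).2 (Wstar (fun j => (q.2 j).1, q.1.2.1)) q.1.2.2)
  have hH : Measurable H := by
    have e1 : Measurable fun q : (ℝ × ℝ × Vec m) × (Fin N → Vec d × Vec d) =>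
        𝒞 (q.2 i).1 (q.2 (jIdx N q.1.2.1)).1 q.1.2.2 := by
      have e : Measurable fun q : (ℝ × ℝ × Vec m) × (Fin N → Vec d × Vec d) =>
          q.2 (jIdx N q.1.2.1) :=
        (measurable_eval_jIdx' N).comp
          (f := fun q : (ℝ × ℝ × Vec m) × (Fin N → Vec d × Vec d) => (q.2, q.1.2.1)) (by fun_prop)
      exact h𝒞.comp (f := fun q : (ℝ × ℝ × Vec m) × (Fin N → Vec d × Vec d) =>
        (((q.2 i).1, (q.2 (jIdx N q.1.2.1)).1), q.1.2.2)) (by fun_prop)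
    have e2 : Measurable fun q : (ℝ × ℝ × Vec m) × (Fin N → Vec d × Vec d) =>
        𝒞 (q.2 i).2 (Wstar (fun j => (q.2 j).1, q.1.2.1)) q.1.2.2 := by
      exact h𝒞.comp (f := fun q : (ℝ × ℝ × Vec m) × (Fin N → Vec d × Vec d) =>
        (((q.2 i).2, Wstar (fun j => (q.2 j).1, q.1.2.1)), q.1.2.2)) (by fun_prop)
    have et : Measurable fun q : (ℝ × ℝ × Vec m) × (Fin N → Vec d × Vec d) => q.1.1 := by fun_prop
    have et' : Measurable fun q : (ℝ × ℝ × Vec m) × (Fin N → Vec d × Vec d) => 1 - q.1.1 := by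
      fun_prop
    have ev : Measurable fun q : (ℝ × ℝ × Vec m) × (Fin N → Vec d × Vec d) => (q.2 i).1 := by
      fun_prop
    have ew : Measurable fun q : (ℝ × ℝ × Vec m) × (Fin N → Vec d × Vec d) => (q.2 i).2 := by
      fun_prop
    exact ((et'.smul ev).add (et.smul e1)).sub ((et'.smul ew).add (et.smul e2))
  let Y : Ω → (Fin N → Vec d × Vec d) := fun ω j => (V j ω, W j ω)
  have hY : Measurable Y := measurable_pi_lambda _ fun j => (hV j).prodMk (hW j)
  have hUi : Measure.map (U i) ℙ = (bern Δt).prod ((unifIco N).prod b) := by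
    have := (measurePreserving_eval (fun _ : Fin N => (bern Δt).prod ((unifIco N).prod b)) i).map_eq
    rw [← hUlaw, Measure.map_map (measurable_pi_apply i) (measurable_pi_lambda _ hU)] at this
    exact this
  have hindi : IndepFun (U i) Y ℙ := hind.comp (measurable_pi_apply i) measurable_id
  have hlaw : Measure.map (fun ω => (U i ω, Y ω)) ℙ
      = ((bern Δt).prod ((unifIco N).prod b)).prod (Measure.map Y ℙ) := by
    rw [← hUi]
    exact (indepFun_iff_map_prod_eq_prod_map_map (hU i).aemeasurable hY.aemeasurable).1 hindi
  have : IsProbabilityMeasure (Measure.map Y ℙ) := Measure.isProbabilityMeasure_map hY.aemeasurable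
  have hinner : ∀ y : Fin N → Vec d × Vec d,
      ∫⁻ u, ‖H (u, y)‖ₑ ∂((bern Δt).prod ((unifIco N).prod b)) ≤
        ENNReal.ofReal (1 + Δt * K) * ‖(y i).1 - (y i).2‖ₑ +
          ENNReal.ofReal (Δt * K) * ENNReal.ofReal (W1 (empMeas fun j => (y j).1) fn) := by
    intro y
    obtain ⟨c1, c2, c3⟩ := hcoup (fun j => (y j).1)
    have hcost := cost_eq' fn hfn Wstar hWs (fun j => (y j).1) c1 c2 c3
    have hHy : Measurable fun u => ‖H (u, y)‖ₑ := (hH.comp (by fun_prop)).enorm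
    rw [lintegral_prod _ hHy.aemeasurable]
    have hm2 : Measurable fun a : ℝ => ∫⁻ z, ‖H ((a, z), y)‖ₑ ∂((unifIco N).prod b) :=
      hHy.lintegral_prod_right'
    have hsplit : ∫⁻ a, ∫⁻ z, ‖H ((a, z), y)‖ₑ ∂((unifIco N).prod b) ∂(bern Δt)
        = ENNReal.ofReal (1 - Δt) * ∫⁻ z, ‖H ((0, z), y)‖ₑ ∂((unifIco N).prod b)
          + ENNReal.ofReal Δt * ∫⁻ z, ‖H ((1, z), y)‖ₑ ∂((unifIco N).prod b) := by
      rw [bern, lintegral_add_measure, lintegral_smul_measure, lintegral_smul_measure,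
        lintegral_dirac' _ hm2, lintegral_dirac' _ hm2]
      rfl
    rw [hsplit]
    have h0 : ∫⁻ z, ‖H ((0, z), y)‖ₑ ∂((unifIco N).prod b) = ‖(y i).1 - (y i).2‖ₑ := by
      simp [H]
    have h1 : ∫⁻ z, ‖H ((1, z), y)‖ₑ ∂((unifIco N).prod b) ≤
        ENNReal.ofReal K * (‖(y i).1 - (y i).2‖ₑ
          + ENNReal.ofReal (W1 (empMeas fun j => (y j).1) fn)) := by
      have hHy1 : Measurable fun z => ‖H ((1, z), y)‖ₑ := hHy.comp (by fun_prop)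
      rw [lintegral_prod _ hHy1.aemeasurable, ← hcost]
      have hb1 : ∀ α : ℝ, ∫⁻ θ, ‖H ((1, (α, θ)), y)‖ₑ ∂b ≤
          ENNReal.ofReal K * (‖(y i).1 - (y i).2‖ₑ
            + ‖(y (jIdx N α)).1 - Wstar (fun j => (y j).1, α)‖ₑ) := by
        intro α
        calc ∫⁻ θ, ‖H ((1, (α, θ)), y)‖ₑ ∂b
            ≤ ∫⁻ _, ENNReal.ofReal K * (‖(y i).1 - (y i).2‖ₑ
            + ‖(y (jIdx N α)).1 - Wstar (fun j => (y j).1, α)‖ₑ) ∂b := by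
              refine lintegral_mono_ae ?_
              filter_upwards [hbM] with θ hθ
              have hl := hLip (y i).1 (y (jIdx N α)).1 (y i).2 (Wstar (fun j => (y j).1, α)) θ
              have hl2 : ‖H ((1, (α, θ)), y)‖ ≤ K * (‖(y i).1 - (y i).2‖
                  + ‖(y (jIdx N α)).1 - Wstar (fun j => (y j).1, α)‖) := by
                simp only [H, sub_self, zero_smul, one_smul, zero_add]
                refine hl.trans ?_
                rw [hKdef]
                gcongr
              rw [← ofReal_norm, ← ofReal_norm, ← ofReal_norm,
                ← ENNReal.ofReal_add (norm_nonneg _) (norm_nonneg _), ← ENNReal.ofReal_mul hK.le]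
              exact ENNReal.ofReal_le_ofReal hl2
          _ = _ := by simp
      refine (lintegral_mono hb1).trans ?_
      rw [lintegral_const_mul' _ _ ENNReal.ofReal_ne_top, lintegral_add_left measurable_const]
      simp
    rw [h0]
    calc _ ≤ ENNReal.ofReal (1 - Δt) * ‖(y i).1 - (y i).2‖ₑ + ENNReal.ofReal Δt *
          (ENNReal.ofReal K * (‖(y i).1 - (y i).2‖ₑ
          + ENNReal.ofReal (W1 (empMeas fun j => (y j).1) fn))) := by gcongr
      _ = (ENNReal.ofReal (1 - Δt) + ENNReal.ofReal (Δt * K)) * ‖(y i).1 - (y i).2‖ₑ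
          + ENNReal.ofReal (Δt * K) * ENNReal.ofReal (W1 (empMeas fun j => (y j).1) fn) := by
          rw [ENNReal.ofReal_mul hΔt.1.le]; ring
      _ ≤ _ := by
          have : 0 < Δt * K := mul_pos hΔt.1 hK
          rw [← ENNReal.ofReal_add (by linarith [hΔt.2]) this.le]
          gcongr
          linarith [hΔt.1]
  have hW1nn : ∀ ω, 0 ≤ W1 (empMeas fun j => V j ω) fn := by
    intro ω
    rw [W1_symm', ← (hcoup (fun j => V j ω)).2.2]
    exact integral_nonneg fun _ => norm_nonneg _
  have hΔK : 0 < Δt * K := mul_pos hΔt.1 hK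
  have hmain : ∫⁻ ω, ‖H (U i ω, Y ω)‖ₑ ∂ℙ ≤ ENNReal.ofReal
      ((1 + Δt * K) * (∫ ω, ‖V i ω - W i ω‖ ∂ℙ) +
            Δt * K * ∫ ω, W1 (empMeas fun j => V j ω) fn ∂ℙ) := by
    calc ∫⁻ ω, ‖H (U i ω, Y ω)‖ₑ ∂ℙ
        = ∫⁻ q, ‖H q‖ₑ ∂(Measure.map (fun ω => (U i ω, Y ω)) ℙ) :=
          (lintegral_map hH.enorm ((hU i).prodMk hY)).symm
      _ = ∫⁻ y, ∫⁻ u, ‖H (u, y)‖ₑ ∂((bern Δt).prod ((unifIco N).prod b)) ∂(Measure.map Y ℙ) := by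
          rw [hlaw, lintegral_prod_symm' _ hH.enorm]
      _ ≤ _ := lintegral_mono hinner
      _ ≤ ∫⁻ ω, (ENNReal.ofReal (1 + Δt * K) * ‖(Y ω i).1 - (Y ω i).2‖ₑ +
          ENNReal.ofReal (Δt * K) * ENNReal.ofReal (W1 (empMeas fun j => (Y ω j).1) fn)) ∂ℙ :=
          lintegral_map_le _ _
      _ = ∫⁻ ω, (ENNReal.ofReal (1 + Δt * K) * ENNReal.ofReal ‖V i ω - W i ω‖ +
          ENNReal.ofReal (Δt * K) * ENNReal.ofReal (W1 (empMeas fun j => V j ω) fn)) ∂ℙ := by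
          simp [Y]
      _ = _ := by
          have hmm : Measurable fun ω => ENNReal.ofReal (1 + Δt * K) *
              ENNReal.ofReal ‖V i ω - W i ω‖ :=
            (((hV i).sub (hW i)).norm.ennreal_ofReal).const_mul _
          rw [lintegral_add_left hmm,
            lintegral_const_mul' _ _ ENNReal.ofReal_ne_top,
            lintegral_const_mul' _ _ ENNReal.ofReal_ne_top,
            ← ofReal_integral_eq_lintegral_ofReal (hVW i) (ae_of_all _ fun _ => norm_nonneg _),
            ← ofReal_integral_eq_lintegral_ofReal hW1 (ae_of_all _ hW1nn),
            ← ENNReal.ofReal_mul (by linarith), ← ENNReal.ofReal_mul hΔK.le,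
            ← ENNReal.ofReal_add
              (mul_nonneg (by linarith) (integral_nonneg fun _ => norm_nonneg _))
              (mul_nonneg hΔK.le (integral_nonneg hW1nn))]
  have hRnn : 0 ≤ (1 + Δt * K) * (∫ ω, ‖V i ω - W i ω‖ ∂ℙ) +
            Δt * K * ∫ ω, W1 (empMeas fun j => V j ω) fn ∂ℙ :=
    add_nonneg (mul_nonneg (by linarith) (integral_nonneg fun _ => norm_nonneg _))
      (mul_nonneg hΔK.le (integral_nonneg hW1nn))
  change ∫ ω, ‖H (U i ω, Y ω)‖ ∂ℙ ≤ _
  have hms : AEStronglyMeasurable (fun ω => H (U i ω, Y ω)) ℙ :=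
    (hH.comp ((hU i).prodMk hY)).aestronglyMeasurable
  rw [integral_norm_eq_lintegral_enorm hms]
  exact ENNReal.toReal_le_of_le_ofReal hRnn hmain
end
end

section
/- (Existence of weak measure solutions.) Let f₀ be a probability measure on ℝ^d with finite first moment, b a probability measure on Θ with bounded support, and 𝒞 satisfy the Lipschitz and linear growth conditions of the paper. Fix T > 0. Then there exists f ∈ C([0,T], P₁(ℝ^d)) with f(0) = f₀ which is a weak measure solution of the Boltzmann-type equation ∂_t f = Q(f,f): for every test function φ ∈ C_c^∞(ℝ^d) and almost every t ∈ [0,T], (d/dt) ∫ φ(v) f(t,dv) = (1/2) ∫∫∫ b(dθ) (φ(𝒞(v,v*,θ)) + φ(𝒞(v*,v,θ)) − φ(v) − φ(v*)) f(t,dv) f(t,dv*). Moreover f is obtained as the uniform-in-time Wasserstein-1 limit of the piecewise-linear forward Euler interpolants f^{Δt_k} with Δt_k = T/2^k. -/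
open MeasureTheory ProbabilityTheory Set
open scoped ENNReal

noncomputable section

theorem abs_limit {X : Type*} [NormedAddCommGroup X] [NormedSpace ℝ X] [CompleteSpace X]
    {T : ℝ} (hT : 0 ≤ T) (G : X → X) (S : Set X) (hS : IsClosed S) (Λ : NNReal)
    (hG : LipschitzOnWith Λ G S) (u u' : ℕ → ℝ → X) (ε : ℕ → ℝ)
    (hε : Filter.Tendsto ε Filter.atTop (nhds 0)) (x0 : X)
    (hc : ∀ k, ContinuousOn (u k) (Icc 0 T))
    (hd : ∀ k, ∀ t ∈ Ico (0:ℝ) T, HasDerivWithinAt (u k) (u' k t) (Ici t) t)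
    (hb : ∀ k, ∀ t ∈ Ico (0:ℝ) T, dist (u' k t) (G (u k t)) ≤ ε k)
    (hm : ∀ k, ∀ t ∈ Icc (0:ℝ) T, u k t ∈ S)
    (h0 : ∀ k, u k 0 = x0) :
    ∃ p : ℝ → X, p 0 = x0 ∧ Continuous p ∧ (∀ t, p t ∈ S) ∧
      TendstoUniformlyOn u p Filter.atTop (Icc 0 T) ∧
      (∀ t ∈ Icc (0:ℝ) T, p t - p 0 = ∫ s in (0:ℝ)..t, G (p s)) := by
  have key : ∀ k l, ∀ t ∈ Icc (0:ℝ) T, dist (u k t) (u l t) ≤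
      gronwallBound 0 Λ (ε k + ε l) (t - 0) := fun k l =>
    dist_le_of_approx_trajectories_ODE_of_mem (v := fun _ => G) (s := fun _ => S)
      (fun _ _ => hG) (hc k) (hd k) (hb k) (fun t ht => hm k t (Ico_subset_Icc_self ht))
      (hc l) (hd l) (hb l) (fun t ht => hm l t (Ico_subset_Icc_self ht)) (by simp [h0])
  have hgt : Filter.Tendsto (fun q : ℕ × ℕ => gronwallBound 0 Λ (|ε q.1| + |ε q.2|) T)
      (Filter.atTop ×ˢ Filter.atTop) (nhds 0) := by
    have h1 : Filter.Tendsto (fun q : ℕ × ℕ => |ε q.1| + |ε q.2|)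
        (Filter.atTop ×ˢ Filter.atTop) (nhds 0) := by
      have ha : Filter.Tendsto (fun k => |ε k|) Filter.atTop (nhds 0) := by simpa using hε.abs
      simpa using (ha.comp Filter.tendsto_fst).add (ha.comp Filter.tendsto_snd)
    have h2 := ((gronwallBound_continuous_ε 0 Λ T).tendsto 0).comp h1
    simpa [gronwallBound_ε0_δ0, Function.comp_def] using h2
  have mono : ∀ k l, ∀ t ∈ Icc (0:ℝ) T, dist (u k t) (u l t) ≤
      gronwallBound 0 Λ (|ε k| + |ε l|) T := by
    intro k l t ht
    refine (dist_le_of_approx_trajectories_ODE_of_mem (v := fun _ => G) (s := fun _ => S)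
      (fun _ _ => hG) (hc k) (hd k) (fun t ht => (hb k t ht).trans (le_abs_self _))
      (fun t ht => hm k t (Ico_subset_Icc_self ht))
      (hc l) (hd l) (fun t ht => (hb l t ht).trans (le_abs_self _))
      (fun t ht => hm l t (Ico_subset_Icc_self ht)) (δ := 0) (by simp [h0]) t ht).trans ?_
    exact gronwallBound_mono le_rfl (by positivity) Λ.2 (by simpa using ht.2)
  have hU : UniformCauchySeqOn u Filter.atTop (Icc 0 T) := by
    rw [Metric.uniformCauchySeqOn_iff]
    intro e he
    have h := hgt.eventually (gt_mem_nhds he)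
    rw [Filter.prod_atTop_atTop_eq, Filter.eventually_atTop] at h
    obtain ⟨⟨a, b⟩, hab⟩ := h
    refine ⟨max a b, fun m hmm n hn t ht => (mono m n t ht).trans_lt (hab (m, n) ?_)⟩
    exact ⟨(le_max_left _ _).trans hmm, (le_max_right _ _).trans hn⟩
  have hex : ∀ t ∈ Icc (0:ℝ) T, ∃ y, Filter.Tendsto (fun k => u k t) Filter.atTop (nhds y) :=
    fun t ht => cauchySeq_tendsto_of_complete (hU.cauchySeq ht)
  choose! q hq using hex
  have hUq : TendstoUniformlyOn u q Filter.atTop (Icc 0 T) :=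
    hU.tendstoUniformlyOn_of_tendsto hq
  have hqc : ContinuousOn q (Icc 0 T) := hUq.continuousOn (Filter.Frequently.of_forall hc)
  let p : ℝ → X := fun t => q (projIcc 0 T hT t)
  have hpq : ∀ t ∈ Icc (0:ℝ) T, p t = q t := fun t ht => by simp [p, projIcc_of_mem hT ht]
  have hpc : Continuous p :=
    hqc.comp_continuous (continuous_subtype_val.comp continuous_projIcc)
      (fun t => (projIcc 0 T hT t).2)
  have hpS : ∀ t, p t ∈ S := fun t =>
    hS.mem_of_tendsto (hq _ (projIcc 0 T hT t).2)
      (Filter.Eventually.of_forall fun k => hm k _ (projIcc 0 T hT t).2)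
  have hUp : TendstoUniformlyOn u p Filter.atTop (Icc 0 T) :=
    hUq.congr_right fun t ht => (hpq t ht).symm
  have z0 : (0:ℝ) ∈ Icc 0 T := ⟨le_rfl, hT⟩
  have hp0 : p 0 = x0 := by
    refine tendsto_nhds_unique (hUp.tendsto_at z0) ?_
    simp [h0]
  refine ⟨p, hp0, hpc, hpS, hUp, ?_⟩
  have hGp : Continuous fun s => G (p s) := hG.continuousOn.comp_continuous hpc hpS
  intro t ht
  have est : ∀ e > 0, ‖p t - (p 0 + ∫ s in (0:ℝ)..t, G (p s))‖ ≤ e * (1 + (1 + Λ) * T) := by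
    intro e he
    have h1 := (Metric.tendstoUniformlyOn_iff.1 hUp e he).and (hε.eventually (gt_mem_nhds he))
    obtain ⟨k, hk, hke⟩ := h1.exists
    have h2 := norm_image_sub_le_of_norm_deriv_right_le_segment (a := 0) (b := T)
      (f := fun r => u k r - ∫ s in (0:ℝ)..r, G (p s)) (f' := fun r => u' k r - G (p r))
      (C := e + Λ * e)
      ((hc k).sub (intervalIntegral.continuous_primitive
        (fun a b => hGp.intervalIntegrable a b) 0).continuousOn)
      (fun r hr => (hd k r hr).sub (hGp.integral_hasStrictDerivAt 0 r).hasDerivAt.hasDerivWithinAt)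
      (fun r hr => by
        have hr' := Ico_subset_Icc_self hr
        rw [← dist_eq_norm]
        refine (dist_triangle _ (G (u k r)) _).trans (add_le_add ((hb k r hr).trans hke.le) ?_)
        refine (hG.dist_le_mul _ (hm k r hr') _ (hpS r)).trans ?_
        gcongr
        rw [dist_comm]; exact (hk r hr').le) t ht
    have h3 := hk t ht
    rw [dist_eq_norm] at h3
    simp only [intervalIntegral.integral_same, sub_zero, h0] at h2
    have : p t - (p 0 + ∫ s in (0:ℝ)..t, G (p s)) =
      (p t - u k t) + (u k t - (∫ s in (0:ℝ)..t, G (p s)) - x0) := by rw [hp0]; abel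
    rw [this]
    refine (norm_add_le _ _).trans ?_
    have h4 : (e + Λ * e) * t ≤ (e + Λ * e) * T := by
      gcongr; exact ht.2
    linarith
  have : ‖p t - (p 0 + ∫ s in (0:ℝ)..t, G (p s))‖ ≤ 0 := by
    refine le_of_forall_pos_le_add fun e he => ?_
    have hpos : 0 < 1 + (1 + (Λ:ℝ)) * T := by positivity
    have := est (e / (1 + (1 + Λ) * T)) (by positivity)
    rw [div_mul_cancel₀ _ hpos.ne'] at this
    linarith
  have := norm_le_zero_iff.1 this
  rw [sub_eq_zero] at this
  rw [this]; abel

/-- Euler iterates in a vector space. -/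
def eulX {X : Type*} [AddCommGroup X] [Module ℝ X] (G : X → X) (x0 : X) (h : ℝ) : ℕ → X
  | 0 => x0
  | n + 1 => eulX G x0 h n + h • G (eulX G x0 h n)

/-- Interpolated Euler iterates in a vector space. -/
def eulU {X : Type*} [AddCommGroup X] [Module ℝ X] (G : X → X) (x0 : X) (h : ℝ) (t : ℝ) : X :=
  eulX G x0 h ⌊t / h⌋.toNat + (t - ⌊t / h⌋.toNat * h) • G (eulX G x0 h ⌊t / h⌋.toNat)

theorem floor_eq_of_mem {h : ℝ} (hh : 0 < h) (n : ℕ) {t : ℝ}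
    (ht : t ∈ Ico (n * h) ((n + 1) * h)) : ⌊t / h⌋.toNat = n := by
  have : ⌊t / h⌋ = n := by
    rw [Int.floor_eq_iff]
    constructor
    · rw [le_div_iff₀ hh]; exact_mod_cast ht.1
    · rw [div_lt_iff₀ hh]; exact_mod_cast ht.2
  simp [this]

theorem floor_mem {h : ℝ} (hh : 0 < h) {t : ℝ} (ht : 0 ≤ t) :
    t ∈ Ico ((⌊t / h⌋.toNat : ℝ) * h) (((⌊t / h⌋.toNat : ℝ) + 1) * h) := by
  have h0 : 0 ≤ ⌊t / h⌋ := Int.floor_nonneg.2 (by positivity)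
  have h1 : ((⌊t / h⌋.toNat : ℤ) : ℝ) = (⌊t / h⌋ : ℝ) := by rw [Int.toNat_of_nonneg h0]
  have h2 : (⌊t / h⌋.toNat : ℝ) = (⌊t / h⌋ : ℝ) := by exact_mod_cast h1
  rw [h2]
  constructor
  · rw [← le_div_iff₀ hh]; exact Int.floor_le _
  · rw [← div_lt_iff₀ hh]; exact Int.lt_floor_add_one _

theorem eulU_eq_Ico {X : Type*} [AddCommGroup X] [Module ℝ X] (G : X → X) (x0 : X) {h : ℝ}
    (hh : 0 < h) (n : ℕ) {t : ℝ} (ht : t ∈ Ico (n * h) ((n + 1) * h)) :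
    eulU G x0 h t = eulX G x0 h n + (t - n * h) • G (eulX G x0 h n) := by
  unfold eulU
  rw [floor_eq_of_mem hh n ht]

theorem eulU_eq_Icc {X : Type*} [AddCommGroup X] [Module ℝ X] (G : X → X) (x0 : X) {h : ℝ}
    (hh : 0 < h) (n : ℕ) {t : ℝ} (ht : t ∈ Icc (n * h) ((n + 1) * h)) :
    eulU G x0 h t = eulX G x0 h n + (t - n * h) • G (eulX G x0 h n) := by
  rcases ht.2.lt_or_eq with h1 | h1
  · exact eulU_eq_Ico G x0 hh n ⟨ht.1, h1⟩
  · rw [eulU_eq_Ico G x0 hh (n + 1) (t := t) (by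
      subst h1; push_cast; constructor
      · exact le_rfl
      · nlinarith)]
    subst h1
    push_cast
    rw [sub_self, zero_smul, add_zero, eulX]
    congr 2
    ring

theorem eulU_cont {X : Type*} [NormedAddCommGroup X] [NormedSpace ℝ X] (G : X → X) (x0 : X) {h : ℝ}
    (hh : 0 < h) (n : ℕ) : ContinuousOn (eulU G x0 h) (Icc 0 (n * h)) := by
  induction n with
  | zero => simp
  | succ n ih =>
    have : Icc (0:ℝ) ((n + 1 : ℕ) * h) = Icc 0 (n * h) ∪ Icc (n * h) ((n + 1 : ℕ) * h) := by
      rw [Icc_union_Icc_eq_Icc]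
      · positivity
      · push_cast; nlinarith
    rw [this]
    refine ih.union_of_isClosed ?_ isClosed_Icc isClosed_Icc
    have : ContinuousOn (fun t => eulX G x0 h n + (t - n * h) • G (eulX G x0 h n))
      (Icc (n * h) ((n + 1 : ℕ) * h)) := by fun_prop
    refine this.congr fun t ht => eulU_eq_Icc G x0 hh n ?_
    exact_mod_cast ht

theorem eulU_deriv {X : Type*} [NormedAddCommGroup X] [NormedSpace ℝ X] (G : X → X) (x0 : X) {h : ℝ}
    (hh : 0 < h) {t : ℝ} (ht : 0 ≤ t) :
    HasDerivWithinAt (eulU G x0 h) (G (eulX G x0 h ⌊t / h⌋.toNat)) (Ici t) t := by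
  set n := ⌊t / h⌋.toNat
  have hm : t ∈ Ico (n * h) ((n + 1) * h) := floor_mem hh ht
  have h1 : HasDerivWithinAt (fun s : ℝ => eulX G x0 h n + (s - n * h) • G (eulX G x0 h n))
      (G (eulX G x0 h n)) (Ici t) t := by
    have := (((hasDerivAt_id t).sub_const ((n:ℝ) * h)).smul_const (G (eulX G x0 h n))).const_add
      (eulX G x0 h n)
    simpa using this.hasDerivWithinAt
  refine h1.congr_of_eventuallyEq ?_ (eulU_eq_Ico G x0 hh n hm)
  have : Ico t ((n + 1) * h) ∈ nhdsWithin t (Ici t) := Ico_mem_nhdsGE hm.2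
  filter_upwards [this] with s hs
  exact eulU_eq_Ico G x0 hh n ⟨hm.1.trans hs.1, hs.2⟩

theorem eulU_limit {X : Type*} [NormedAddCommGroup X] [NormedSpace ℝ X] [CompleteSpace X]
    {T : ℝ} (hT : 0 < T) (G : X → X) (S : Set X) (hS : IsClosed S) (hcv : Convex ℝ S) (Λ : NNReal)
    (hG : LipschitzOnWith Λ G S) (M : ℝ) (hM : ∀ x ∈ S, ‖G x‖ ≤ M) (x0 : X) (k0 : ℕ)
    (hx : ∀ k ≥ k0, ∀ n ≤ 2 ^ k + 1, eulX G x0 (T / 2 ^ k) n ∈ S) :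
    (∀ k ≥ k0, ∀ t ∈ Icc (0:ℝ) T, eulU G x0 (T / 2 ^ k) t ∈ S) ∧
    ∃ p : ℝ → X, p 0 = x0 ∧ Continuous p ∧ (∀ t, p t ∈ S) ∧
      (∀ ε > 0, ∃ K, ∀ k ≥ K, ∀ t ∈ Icc (0:ℝ) T, ‖eulU G x0 (T / 2 ^ k) t - p t‖ < ε) ∧
      (∀ t ∈ Icc (0:ℝ) T, p t - p 0 = ∫ s in (0:ℝ)..t, G (p s)) := by
  have hh : ∀ k : ℕ, 0 < T / 2 ^ k := fun k => by positivity
  have hTk : ∀ k : ℕ, ((2 ^ k : ℕ) : ℝ) * (T / 2 ^ k) = T := fun k => by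
    push_cast; field_simp
  have hn : ∀ k : ℕ, ∀ t ∈ Icc (0:ℝ) T, ⌊t / (T / 2 ^ k)⌋.toNat ≤ 2 ^ k := by
    intro k t ht
    have h1 := (floor_mem (hh k) ht.1).1
    have h2 : (⌊t / (T / 2 ^ k)⌋.toNat : ℝ) * (T / 2 ^ k) ≤ ((2 ^ k : ℕ) : ℝ) * (T / 2 ^ k) := by
      rw [hTk]; exact h1.trans ht.2
    exact_mod_cast le_of_mul_le_mul_right h2 (hh k)
  have hmem : ∀ k ≥ k0, ∀ t ∈ Icc (0:ℝ) T, eulU G x0 (T / 2 ^ k) t ∈ S := by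
    intro k hk t ht
    have h1 := hx k hk _ ((hn k t ht).trans (Nat.le_succ _))
    have h2 := hx k hk _ (Nat.succ_le_succ (hn k t ht))
    have hm := floor_mem (hh k) ht.1
    unfold eulU
    set n := ⌊t / (T / 2 ^ k)⌋.toNat
    set h := T / 2 ^ k
    have hpos : 0 < h := hh k
    have h3 := hcv.add_smul_sub_mem h1 h2 (t := (t - n * h) / h)
      ⟨div_nonneg (by linarith [hm.1]) hpos.le, by
        rw [div_le_one hpos]; nlinarith [hm.2]⟩
    convert h3 using 2
    simp only [eulX, add_sub_cancel_left, smul_smul]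
    rw [div_mul_cancel₀ _ hpos.ne']
  refine ⟨hmem, ?_⟩
  obtain ⟨p, hp0, hpc, hpS, hU, hI⟩ := abs_limit hT.le G S hS Λ hG
    (fun k => eulU G x0 (T / 2 ^ (k + k0)))
    (fun k t => G (eulX G x0 (T / 2 ^ (k + k0)) ⌊t / (T / 2 ^ (k + k0))⌋.toNat))
    (fun k => Λ * ((T / 2 ^ (k + k0)) * M))
    (by
      have h1 : Filter.Tendsto (fun k : ℕ => T * (1 / 2 : ℝ) ^ k) Filter.atTop (nhds 0) := by
        simpa using (tendsto_pow_atTop_nhds_zero_of_lt_one (r := (1/2:ℝ)) (by norm_num)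
          (by norm_num)).const_mul T
      have h2 := ((h1.comp (Filter.tendsto_add_atTop_nat k0)).mul_const M).const_mul (Λ : ℝ)
      simp only [zero_mul, mul_zero] at h2
      refine h2.congr fun k => ?_
      simp [div_eq_mul_inv])
    x0
    (fun k => by
      have := eulU_cont G x0 (hh (k + k0)) (2 ^ (k + k0))
      rwa [hTk] at this)
    (fun k t ht => eulU_deriv G x0 (hh _) ht.1)
    (fun k t ht => by
      have ht' := Ico_subset_Icc_self ht
      have hx1 := hx (k + k0) (by simp) _ ((hn (k+k0) t ht').trans (Nat.le_succ _))
      refine (hG.dist_le_mul _ hx1 _ (hmem _ (by simp) t ht')).trans ?_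
      gcongr
      have hm := floor_mem (hh (k + k0)) ht.1
      unfold eulU
      rw [dist_self_add_right, norm_smul]
      have := hM _ hx1
      gcongr
      rw [Real.norm_of_nonneg (by linarith [hm.1])]
      nlinarith [hm.2])
    (fun k t ht => hmem _ (by simp) t ht)
    (fun k => by simp [eulU, eulX])
  refine ⟨p, hp0, hpc, hpS, ?_, hI⟩
  intro ε hε
  obtain ⟨K, hK⟩ := Filter.eventually_atTop.1 (Metric.tendstoUniformlyOn_iff.1 hU ε hε)
  refine ⟨K + k0, fun k hk t ht => ?_⟩
  have := hK (k - k0) (by omega) t ht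
  rw [Nat.sub_add_cancel (by omega), dist_comm, dist_eq_norm] at this
  exact this

/-- Collision trees. -/
inductive CT : Type
  | leaf : CT
  | node : CT → CT → CT

/-- Injective code of a tree. -/
def CT.code : CT → ℕ
  | .leaf => 0
  | .node a b => Nat.pair a.code b.code + 1

theorem CT.code_inj : Function.Injective CT.code := by
  intro a
  induction a with
  | leaf => intro b hb; cases b <;> simp_all [CT.code]
  | node a1 a2 h1 h2 =>
    intro b hb
    cases b with
    | leaf => simp [CT.code] at hb
    | node b1 b2 =>
      simp only [CT.code, Nat.add_right_cancel_iff, Nat.pair_eq_pair] at hb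
      rw [h1 hb.1, h2 hb.2]

instance : Countable CT := CT.code_inj.countable

theorem CT.hasSum {f : CT → ℝ} {s : ℝ} (h0 : f .leaf = 0)
    (h : HasSum (fun p : CT × CT => f (.node p.1 p.2)) s) : HasSum f s := by
  have hi : Function.Injective (fun p : CT × CT => CT.node p.1 p.2) := by
    rintro ⟨a, b⟩ ⟨c, d⟩ h
    simpa using h
  refine (hi.hasSum_iff (f := f) ?_).1 h
  intro t ht
  cases t with
  | leaf => exact h0
  | node a b => exact absurd ⟨(a, b), rfl⟩ ht

theorem CT.tsum_ennreal (f : CT → ℝ≥0∞) (h0 : f .leaf = 0) :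
    ∑' t, f t = ∑' p : CT × CT, f (.node p.1 p.2) := by
  have hi : Function.Injective (fun p : CT × CT => CT.node p.1 p.2) := by
    rintro ⟨a, b⟩ ⟨c, d⟩ h
    simpa using h
  refine (hi.tsum_eq (f := f) ?_).symm
  intro t ht
  cases t with
  | leaf => exact absurd h0 ht
  | node a b => exact ⟨(a, b), rfl⟩

/-- The sequence space. -/
abbrev XX := lp (fun _ : CT => ℝ) 1

theorem XX.summable_abs (x : XX) : Summable fun t => |x t| := by
  have := (lp.memℓp x).summable (by simp)
  simpa using this

theorem XX.summable (x : XX) : Summable fun t => x t := (XX.summable_abs x).of_abs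

theorem XX.norm_eq (x : XX) : ‖x‖ = ∑' t, |x t| := by
  rw [lp.norm_eq_tsum_rpow (by simp)]
  simp

/-- Build an element of the sequence space. -/
def XX.mk (f : CT → ℝ) (hf : Summable fun t => |f t|) : XX :=
  ⟨f, memℓp_gen (by simpa using hf)⟩

@[simp] theorem XX.mk_apply (f : CT → ℝ) (hf) (t : CT) : XX.mk f hf t = f t := rfl

/-- Weights. -/
def wt (A K : ℝ) : CT → ℝ
  | .leaf => A
  | .node a b => K * (wt A K a + wt A K b)

theorem wt_ge {A K : ℝ} (hA : 1 ≤ A) (hK : 1 ≤ K) (t : CT) : 1 ≤ wt A K t := by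
  induction t with
  | leaf => exact hA
  | node a b ha hb => simp only [wt]; nlinarith

/-- Linear functional with bounded coefficients. -/
def XX.func (c : CT → ℝ) (M : ℝ) (hc : ∀ t, |c t| ≤ M) : XX →L[ℝ] ℝ :=
  LinearMap.mkContinuous
    { toFun := fun x => ∑' t, c t * x t
      map_add' := fun x y => by
        have hs : ∀ x : XX, Summable fun t => c t * x t := fun x =>
          Summable.of_norm_bounded ((XX.summable_abs x).mul_left M) fun t => by
            rw [Real.norm_eq_abs, abs_mul]
            exact mul_le_mul_of_nonneg_right (hc t) (abs_nonneg _)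
        rw [← (hs x).tsum_add (hs y)]
        simp [mul_add]
      map_smul' := fun r x => by
        simp only [lp.coeFn_smul, Pi.smul_apply, smul_eq_mul, RingHom.id_apply]
        rw [← tsum_mul_left]
        congr 1; ext t; ring } M (fun x => by
          simp only [LinearMap.coe_mk, AddHom.coe_mk]
          rw [XX.norm_eq, ← tsum_mul_left]
          have h1 : ∀ t, ‖c t * x t‖ ≤ M * |x t| := fun t => by
            rw [Real.norm_eq_abs, abs_mul]
            exact mul_le_mul_of_nonneg_right (hc t) (abs_nonneg _)
          exact tsum_of_norm_bounded ((XX.summable_abs x).mul_left M).hasSum h1)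

theorem XX.func_apply (c : CT → ℝ) (M : ℝ) (hc) (x : XX) :
    XX.func c M hc x = ∑' t, c t * x t := rfl

theorem XX.func_summable (c : CT → ℝ) (M : ℝ) (hc : ∀ t, |c t| ≤ M) (x : XX) :
    Summable fun t => c t * x t :=
  Summable.of_norm_bounded ((XX.summable_abs x).mul_left M) fun t => by
            rw [Real.norm_eq_abs, abs_mul]
            exact mul_le_mul_of_nonneg_right (hc t) (abs_nonneg _)

/-- coefficient of the bilinear map -/
def kap (A K : ℝ) (a b : CT) : ℝ := K * (wt A K a + wt A K b) / (wt A K a * wt A K b)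

/-- raw bilinear map -/
def BBraw (A K : ℝ) (x y : CT → ℝ) : CT → ℝ
  | .leaf => 0
  | .node a b => x a * y b * kap A K a b

theorem kap_eq {A K : ℝ} (hA : 1 ≤ A) (hK : 1 ≤ K) (a b : CT) :
    kap A K a b = K * ((wt A K a)⁻¹ + (wt A K b)⁻¹) := by
  have h1 := wt_ge hA hK a
  have h2 := wt_ge hA hK b
  unfold kap; field_simp; ring

theorem kap_nonneg {A K : ℝ} (hA : 1 ≤ A) (hK : 1 ≤ K) (a b : CT) : 0 ≤ kap A K a b := by
  have h1 := wt_ge hA hK a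
  have h2 := wt_ge hA hK b
  unfold kap; positivity

theorem kap_le {A K : ℝ} (hA : 1 ≤ A) (hK : 1 ≤ K) (a b : CT) : kap A K a b ≤ 2 * K := by
  rw [kap_eq hA hK]
  have h1 := inv_le_one_of_one_le₀ (wt_ge hA hK a)
  have h2 := inv_le_one_of_one_le₀ (wt_ge hA hK b)
  nlinarith

theorem BBraw_summable {A K : ℝ} (hA : 1 ≤ A) (hK : 1 ≤ K) (x y : XX) :
    Summable (fun t => |BBraw A K x y t|) ∧
      ∑' t, |BBraw A K x y t| ≤ 2 * K * ‖x‖ * ‖y‖ := by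
  have hs : Summable fun p : CT × CT => |x p.1| * |y p.2| :=
    (XX.summable_abs x).mul_of_nonneg (XX.summable_abs y) (fun _ => abs_nonneg _)
      (fun _ => abs_nonneg _)
  have hb : ∀ p : CT × CT, |BBraw A K x y (.node p.1 p.2)| ≤ 2 * K * (|x p.1| * |y p.2|) := by
    intro p
    simp only [BBraw]
    rw [abs_mul, abs_mul, abs_of_nonneg (kap_nonneg hA hK _ _), mul_comm]
    exact mul_le_mul_of_nonneg_right (kap_le hA hK _ _) (by positivity)
  have hs2 : Summable fun p : CT × CT => |BBraw A K x y (.node p.1 p.2)| :=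
    Summable.of_nonneg_of_le (fun _ => abs_nonneg _) hb (hs.mul_left _)
  have h3 := CT.hasSum (f := fun t => |BBraw A K x y t|) (by simp [BBraw]) hs2.hasSum
  refine ⟨h3.summable, ?_⟩
  rw [h3.tsum_eq]
  refine (hs2.tsum_le_tsum hb (hs.mul_left _)).trans ?_
  have h5 := (XX.summable_abs x).tsum_mul_tsum (XX.summable_abs y) hs
  rw [tsum_mul_left, ← h5, XX.norm_eq, XX.norm_eq, mul_assoc (2 * K)]

/-- bilinear map -/
def BB {A K : ℝ} (hA : 1 ≤ A) (hK : 1 ≤ K) (x y : XX) : XX :=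
  XX.mk (BBraw A K x y) (BBraw_summable hA hK x y).1

theorem BB_norm {A K : ℝ} (hA : 1 ≤ A) (hK : 1 ≤ K) (x y : XX) :
    ‖BB hA hK x y‖ ≤ 2 * K * ‖x‖ * ‖y‖ := by
  rw [XX.norm_eq]; exact (BBraw_summable hA hK x y).2

/-- vector field -/
def GG {A K : ℝ} (hA : 1 ≤ A) (hK : 1 ≤ K) (x : XX) : XX := BB hA hK x x - x

theorem BB_sub {A K : ℝ} (hA : 1 ≤ A) (hK : 1 ≤ K) (x y : XX) :
    BB hA hK x x - BB hA hK y y = BB hA hK (x - y) x + BB hA hK y (x - y) := by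
  ext t
  cases t with
  | leaf => simp [BB, BBraw]
  | node a b => simp [BB, BBraw]; ring

/-- the invariant set -/
def SS (A K R : ℝ) : Set XX :=
  {x | (∀ t, 0 ≤ x t) ∧ (∑' t, (wt A K t)⁻¹ * x t = 1) ∧ ‖x‖ ≤ R}

theorem wt_inv_abs {A K : ℝ} (hA : 1 ≤ A) (hK : 1 ≤ K) (t : CT) : |(wt A K t)⁻¹| ≤ 1 := by
  have := wt_ge hA hK t
  rw [abs_of_nonneg (by positivity)]
  exact inv_le_one_of_one_le₀ this

theorem SS_closed {A K : ℝ} (hA : 1 ≤ A) (hK : 1 ≤ K) (R : ℝ) : IsClosed (SS A K R) := by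
  have h1 : IsClosed {x : XX | ∀ t, 0 ≤ x t} := by
    simp only [ofPred_forall]
    refine isClosed_iInter fun t => isClosed_le continuous_const ?_
    have hL : LipschitzWith 1 (fun x : XX => x t) := by
      refine LipschitzWith.of_dist_le_mul fun x y => ?_
      rw [dist_eq_norm, dist_eq_norm]
      simpa using lp.norm_apply_le_norm one_ne_zero (x - y) t
    exact hL.continuous
  have h2 : IsClosed {x : XX | ∑' t, (wt A K t)⁻¹ * x t = 1} :=
    isClosed_eq (XX.func _ 1 (wt_inv_abs hA hK)).continuous continuous_const
  have h3 : IsClosed {x : XX | ‖x‖ ≤ R} := isClosed_le continuous_norm continuous_const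
  exact h1.inter (h2.inter h3)

theorem SS_convex {A K : ℝ} (hA : 1 ≤ A) (hK : 1 ≤ K) (R : ℝ) : Convex ℝ (SS A K R) := by
  rintro x ⟨hx1, hx2, hx3⟩ y ⟨hy1, hy2, hy3⟩ a b ha hb hab
  refine ⟨fun t => ?_, ?_, ?_⟩
  · have := hx1 t; have := hy1 t
    simp only [lp.coeFn_add, lp.coeFn_smul, Pi.add_apply, Pi.smul_apply, smul_eq_mul]
    positivity
  · have := (XX.func _ 1 (wt_inv_abs hA hK)).map_add (a • x) (b • y)
    rw [map_smul, map_smul] at this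
    simp only [XX.func_apply, hx2, hy2] at this
    rw [this]; simpa using hab
  · refine (norm_add_le _ _).trans ?_
    rw [norm_smul, norm_smul, Real.norm_of_nonneg ha, Real.norm_of_nonneg hb]
    calc a * ‖x‖ + b * ‖y‖ ≤ a * R + b * R := by gcongr
      _ = R := by rw [← add_mul, hab, one_mul]

theorem GG_lip {A K R : ℝ} (hA : 1 ≤ A) (hK : 1 ≤ K) (hR : 0 ≤ R) :
    LipschitzOnWith (4 * K * R + 1).toNNReal (GG hA hK) (SS A K R) := by
  refine LipschitzOnWith.of_dist_le_mul fun x hx y hy => ?_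
  have hK0 : 0 ≤ K := by linarith
  rw [Real.coe_toNNReal _ (by positivity), dist_eq_norm, dist_eq_norm]
  have : GG hA hK x - GG hA hK y = (BB hA hK (x - y) x + BB hA hK y (x - y)) - (x - y) := by
    rw [← BB_sub]; unfold GG; abel
  rw [this]
  refine (norm_sub_le _ _).trans ?_
  have h1 := norm_add_le (BB hA hK (x - y) x) (BB hA hK y (x - y))
  have h2 := BB_norm hA hK (x - y) x
  have h3 := BB_norm hA hK y (x - y)
  have h4 : 2 * K * ‖x - y‖ * ‖x‖ ≤ 2 * K * ‖x - y‖ * R :=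
    mul_le_mul_of_nonneg_left hx.2.2 (by positivity)
  have h5 : 2 * K * ‖x - y‖ * ‖y‖ ≤ 2 * K * ‖x - y‖ * R :=
    mul_le_mul_of_nonneg_left hy.2.2 (by positivity)
  nlinarith

theorem GG_bound {A K R : ℝ} (hA : 1 ≤ A) (hK : 1 ≤ K) (hR : 0 ≤ R) :
    ∀ x ∈ SS A K R, ‖GG hA hK x‖ ≤ 2 * K * R * R + R := by
  intro x hx
  have hK0 : 0 ≤ K := by linarith
  refine (norm_sub_le _ _).trans ?_
  refine add_le_add ((BB_norm hA hK x x).trans ?_) hx.2.2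
  have := hx.2.2
  gcongr

theorem XX.norm_of_nonneg {x : XX} (hx : ∀ t, 0 ≤ x t) : ‖x‖ = ∑' t, x t := by
  rw [XX.norm_eq]; congr 1; ext t; exact abs_of_nonneg (hx t)

theorem BB_mem {A K R : ℝ} (hA : 1 ≤ A) (hK : 1 ≤ K) {x : XX} (hx : x ∈ SS A K R) :
    BB hA hK x x ∈ SS A K (2 * K * R) := by
  obtain ⟨h1, h2, h3⟩ := hx
  have hB0 : ∀ t, 0 ≤ BB hA hK x x t := by
    intro t
    cases t with
    | leaf => simp [BB, BBraw]
    | node a b =>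
      have := h1 a; have := h1 b; have := kap_nonneg hA hK a b
      simp only [BB, XX.mk_apply, BBraw]; positivity
  have hw := XX.func_summable _ 1 (wt_inv_abs hA hK) x
  have hw0 : ∀ t, 0 ≤ (wt A K t)⁻¹ * x t := fun t => by
    have := wt_ge hA hK t
    have := h1 t
    positivity
  refine ⟨hB0, ?_, ?_⟩
  · have hs := hw.mul_of_nonneg hw hw0 hw0
    refine (CT.hasSum (s := 1) (by simp [BB, BBraw]) ?_).tsum_eq
    have h4 := hs.hasSum
    rw [← hw.tsum_mul_tsum hw hs, h2, mul_one] at h4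
    convert h4 using 1
    ext p
    have ha := wt_ge hA hK p.1
    have hb := wt_ge hA hK p.2
    simp only [BB, XX.mk_apply, BBraw, kap, wt]
    field_simp
  · rw [XX.norm_of_nonneg hB0]
    have hxs := XX.summable x
    have s1 := hw.mul_of_nonneg hxs hw0 h1
    have s2 := hxs.mul_of_nonneg hw h1 hw0
    have e1 := s1.hasSum
    have e2 := s2.hasSum
    rw [← hw.tsum_mul_tsum hxs s1, h2, ← XX.norm_of_nonneg h1] at e1
    rw [← hxs.tsum_mul_tsum hw s2, h2, ← XX.norm_of_nonneg h1] at e2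
    have e3 := (e1.add e2).mul_left K
    have := CT.hasSum (f := fun t => BB hA hK x x t) (by simp [BB, BBraw])
      (s := K * (1 * ‖x‖ + ‖x‖ * 1)) (by
        have hf : ∀ p : CT × CT, BB hA hK x x (.node p.1 p.2) =
            K * ((wt A K p.1)⁻¹ * x p.1 * x p.2 + x p.1 * ((wt A K p.2)⁻¹ * x p.2)) := by
          intro p
          show x p.1 * x p.2 * kap A K p.1 p.2 = _
          rw [kap_eq hA hK]
          ring
        simp only [hf]
        exact e3)
    rw [this.tsum_eq]
    nlinarith

theorem eul_step {A K R h : ℝ} (hA : 1 ≤ A) (hK : 1 ≤ K) (h0 : 0 ≤ h) (h1 : h ≤ 1) {x : XX}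
    (hx : x ∈ SS A K R) : x + h • GG hA hK x ∈ SS A K (Real.exp (2 * K * h) * R) := by
  have hR : 0 ≤ R := (norm_nonneg _).trans hx.2.2
  have hK0 : 0 ≤ K := by linarith
  have hB := BB_mem hA hK hx
  have h2 : x + h • GG hA hK x = (1 - h) • x + h • BB hA hK x x := by
    unfold GG; module
  rw [h2]
  set R' := max R (2 * K * R)
  have m := SS_convex hA hK R' ⟨hx.1, hx.2.1, hx.2.2.trans (le_max_left _ _)⟩
    ⟨hB.1, hB.2.1, hB.2.2.trans (le_max_right _ _)⟩ (sub_nonneg.2 h1) h0 (by ring)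
  refine ⟨m.1, m.2.1, ?_⟩
  refine (norm_add_le _ _).trans ?_
  rw [norm_smul, norm_smul, Real.norm_of_nonneg h0, Real.norm_of_nonneg (sub_nonneg.2 h1)]
  have e := Real.add_one_le_exp (2 * K * h)
  have e1 : (1 - h) * ‖x‖ ≤ 1 * R := by
    gcongr
    · linarith
    · exact hx.2.2
  have e2 : h * ‖BB hA hK x x‖ ≤ h * (2 * K * R) := by gcongr; exact hB.2.2
  nlinarith

/-- the initial datum -/
def startDatum (A : ℝ) : XX := XX.mk (fun t => match t with | .leaf => A | .node _ _ => 0) (by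
  refine summable_of_ne_finset_zero (s := {CT.leaf}) fun t ht => ?_
  cases t with
  | leaf => simp at ht
  | node a b => simp)

theorem startDatum_mem {A K : ℝ} (hA : 1 ≤ A) : startDatum A ∈ SS A K A := by
  have h0 : ∀ t, 0 ≤ startDatum A t := by
    intro t; cases t <;> simp [startDatum]; linarith
  refine ⟨h0, ?_, ?_⟩
  · rw [tsum_eq_single CT.leaf]
    · simp only [startDatum, XX.mk_apply, wt]
      rw [inv_mul_cancel₀ (by linarith)]
    · intro t ht
      cases t with
      | leaf => simp at ht
      | node a b => simp [startDatum]
  · rw [XX.norm_of_nonneg h0, tsum_eq_single CT.leaf]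
    · simp [startDatum]
    · intro t ht
      cases t with
      | leaf => simp at ht
      | node a b => simp [startDatum]

theorem eul_mem {A K h : ℝ} (hA : 1 ≤ A) (hK : 1 ≤ K) (h0 : 0 ≤ h) (h1 : h ≤ 1) (n : ℕ) :
    eulX (GG hA hK) (startDatum A) h n ∈ SS A K (Real.exp (2 * K * (n * h)) * A) := by
  induction n with
  | zero => simpa [eulX] using startDatum_mem hA
  | succ n ih =>
    have := eul_step hA hK h0 h1 ih
    simp only [eulX]
    convert this using 2
    rw [← mul_assoc (Real.exp _) (Real.exp _), ← Real.exp_add]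
    congr 2
    push_cast
    ring

/-- first moment -/
def mom {E : Type*} [MeasurableSpace E] [NormedAddCommGroup E] (μ : Measure E) : ℝ≥0∞ :=
  ∫⁻ v, ‖v‖ₑ ∂μ

theorem W1_le_aux {d : ℕ} (ρ α β : Measure (Vec d)) [IsFiniteMeasure ρ] [IsFiniteMeasure α]
    [IsFiniteMeasure β] (hm : α univ = β univ) (c : ℝ) (hc : 0 ≤ c)
    (h : mom α + mom β ≤ ENNReal.ofReal c) : W1 (ρ + α) (ρ + β) ≤ c := by
  have hdiag : Measurable fun v : Vec d => (v, v) := by fun_prop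
  let γ : Measure (Vec d × Vec d) := ρ.map (fun v => (v, v)) + (α univ)⁻¹ • α.prod β
  have hfst : γ.map Prod.fst = ρ + α := by
    simp only [γ]
    rw [Measure.map_add _ _ measurable_fst, Measure.map_map measurable_fst hdiag,
      Measure.map_smul, Measure.map_fst_prod, smul_smul, ← hm]
    congr 1
    · exact Measure.map_id
    · by_cases h0 : α univ = 0
      · rw [Measure.measure_univ_eq_zero] at h0; simp [h0]
      · rw [ENNReal.inv_mul_cancel h0 (measure_ne_top _ _), one_smul]
  have hsnd : γ.map Prod.snd = ρ + β := by
    simp only [γ]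
    rw [Measure.map_add _ _ measurable_snd, Measure.map_map measurable_snd hdiag,
      Measure.map_smul, Measure.map_snd_prod, smul_smul]
    congr 1
    · exact Measure.map_id
    · by_cases h0 : α univ = 0
      · rw [hm, Measure.measure_univ_eq_zero] at h0; simp [h0]
      · rw [ENNReal.inv_mul_cancel h0 (measure_ne_top _ _), one_smul]
  have hcost : ∫ p, ‖p.1 - p.2‖ ∂γ ≤ c := by
    rw [integral_eq_lintegral_of_nonneg_ae (Filter.Eventually.of_forall fun _ => norm_nonneg _)
      (by fun_prop)]
    refine ENNReal.toReal_le_of_le_ofReal hc (le_trans ?_ h)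
    simp only [γ, ofReal_norm]
    rw [lintegral_add_measure, lintegral_smul_measure, lintegral_map (by fun_prop) hdiag]
    simp only [sub_self, enorm_zero, lintegral_zero, zero_add]
    have h1 : ∫⁻ p, ‖p.1 - p.2‖ₑ ∂(α.prod β) ≤ α univ * (mom α + mom β) := by
      calc ∫⁻ p, ‖p.1 - p.2‖ₑ ∂(α.prod β) ≤ ∫⁻ p, (‖p.1‖ₑ + ‖p.2‖ₑ) ∂(α.prod β) :=
            lintegral_mono fun p => enorm_sub_le
        _ = ∫⁻ p, ‖p.1‖ₑ ∂(α.prod β) + ∫⁻ p, ‖p.2‖ₑ ∂(α.prod β) := by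
            rw [lintegral_add_left (by fun_prop)]
        _ = ∫⁻ p, ‖p‖ₑ ∂((α.prod β).map Prod.fst) + ∫⁻ p, ‖p‖ₑ ∂((α.prod β).map Prod.snd) := by
            rw [lintegral_map (by fun_prop) measurable_fst,
              lintegral_map (by fun_prop) measurable_snd]
        _ = α univ * (mom α + mom β) := by
            rw [Measure.map_fst_prod, Measure.map_snd_prod, lintegral_smul_measure,
              lintegral_smul_measure, ← hm, mul_add]
            rfl
    refine (mul_le_mul_right h1 _).trans ?_
    rw [← mul_assoc]
    refine (mul_le_mul_left (ENNReal.inv_mul_le_one _) _).trans ?_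
    rw [one_mul]
  suffices hbdd : BddBelow { c : ℝ | ∃ γ : Measure (Vec d × Vec d),
    γ.map Prod.fst = ρ + α ∧ γ.map Prod.snd = ρ + β ∧ c = ∫ p, ‖p.1 - p.2‖ ∂γ } from
    (csInf_le hbdd ⟨γ, hfst, hsnd, rfl⟩).trans hcost
  refine ⟨0, ?_⟩
  rintro _ ⟨γ', -, -, rfl⟩
  exact integral_nonneg fun _ => norm_nonneg _

/-- mixture of tree measures -/
def mu {E : Type*} [MeasurableSpace E] (Q : CT → Measure E) (w : CT → ℝ) (x : CT → ℝ) :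
    Measure E := Measure.sum fun t => ENNReal.ofReal ((w t)⁻¹ * x t) • Q t

theorem mu_add {E : Type*} [MeasurableSpace E] (Q : CT → Measure E) {w : CT → ℝ}
    (hw : ∀ t, 1 ≤ w t) {x y : CT → ℝ} (hx : ∀ t, 0 ≤ x t) (hy : ∀ t, 0 ≤ y t) :
    mu Q w (x + y) = mu Q w x + mu Q w y := by
  unfold mu
  rw [Measure.sum_add_sum]
  congr 1; ext1 t
  have := hw t; have := hx t; have := hy t
  rw [← add_smul, ← ENNReal.ofReal_add (by positivity) (by positivity), Pi.add_apply, mul_add]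

theorem mu_smul {E : Type*} [MeasurableSpace E] (Q : CT → Measure E) {w : CT → ℝ}
    {x : CT → ℝ} {a : ℝ} (ha : 0 ≤ a) :
    mu Q w (a • x) = ENNReal.ofReal a • mu Q w x := by
  ext s hs
  simp only [mu, Measure.smul_apply, Measure.sum_apply _ hs, smul_eq_mul, Pi.smul_apply]
  rw [← ENNReal.tsum_mul_left]
  congr 1; ext1 t
  rw [← mul_assoc (ENNReal.ofReal a), ← ENNReal.ofReal_mul ha]
  congr 2; ring

theorem mu_univ {E : Type*} [MeasurableSpace E] (Q : CT → Measure E) [∀ t, IsProbabilityMeasure (Q t)]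
    (w x : CT → ℝ) : mu Q w x univ = ∑' t, ENNReal.ofReal ((w t)⁻¹ * x t) := by
  simp [mu, Measure.sum_apply _ MeasurableSet.univ]

theorem mom_mu {d : ℕ} (Q : CT → Measure (Vec d)) {w : CT → ℝ}
    (hw : ∀ t, 1 ≤ w t) (hQ : ∀ t, mom (Q t) ≤ ENNReal.ofReal (w t)) (x : CT → ℝ) :
    mom (mu Q w x) ≤ ∑' t, ENNReal.ofReal (x t) := by
  unfold mom mu
  rw [lintegral_sum_measure]
  refine ENNReal.tsum_le_tsum fun t => ?_
  rw [lintegral_smul_measure, smul_eq_mul]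
  refine (mul_le_mul_right (hQ t) _).trans ?_
  have := hw t
  rw [← ENNReal.ofReal_mul' (by positivity)]
  refine ENNReal.ofReal_le_ofReal (le_of_eq ?_)
  field_simp

theorem mu_prob {d : ℕ} (Q : CT → Measure (Vec d)) [∀ t, IsProbabilityMeasure (Q t)]
    {A K R : ℝ} (hA : 1 ≤ A) (hK : 1 ≤ K) {x : XX} (hx : x ∈ SS A K R) :
    IsProbabilityMeasure (mu Q (wt A K) x) := by
  constructor
  rw [mu_univ, ← ENNReal.ofReal_tsum_of_nonneg, hx.2.1, ENNReal.ofReal_one]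
  · intro t; have := wt_ge hA hK t; have := hx.1 t; positivity
  · exact XX.func_summable _ 1 (wt_inv_abs hA hK) x

theorem mu_int {d : ℕ} (Q : CT → Measure (Vec d)) [∀ t, IsProbabilityMeasure (Q t)]
    {A K R : ℝ} (hA : 1 ≤ A) (hK : 1 ≤ K) (hQ : ∀ t, mom (Q t) ≤ ENNReal.ofReal (wt A K t))
    {x : XX} (hx : x ∈ SS A K R) :
    Integrable (fun v : Vec d => ‖v‖) (mu Q (wt A K) x) := by
  refine Integrable.norm (f := fun v => v) ⟨by fun_prop, ?_⟩
  refine (mom_mu Q (wt_ge hA hK) hQ x).trans_lt ?_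
  rw [← ENNReal.ofReal_tsum_of_nonneg hx.1 (XX.summable x)]
  exact ENNReal.ofReal_lt_top

theorem W1_mu {d : ℕ} (Q : CT → Measure (Vec d)) [∀ t, IsProbabilityMeasure (Q t)]
    {A K R : ℝ} (hA : 1 ≤ A) (hK : 1 ≤ K) (hQ : ∀ t, mom (Q t) ≤ ENNReal.ofReal (wt A K t))
    {x y : XX} (hx : x ∈ SS A K R) (hy : y ∈ SS A K R) :
    W1 (mu Q (wt A K) x) (mu Q (wt A K) y) ≤ 2 * ‖x - y‖ := by
  have hw := wt_ge hA hK
  let r : CT → ℝ := fun t => min (x t) (y t)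
  let a : CT → ℝ := fun t => x t - r t
  let b : CT → ℝ := fun t => y t - r t
  have hr : ∀ t, 0 ≤ r t := fun t => le_min (hx.1 t) (hy.1 t)
  have ha : ∀ t, 0 ≤ a t := fun t => sub_nonneg.2 (min_le_left _ _)
  have hb : ∀ t, 0 ≤ b t := fun t => sub_nonneg.2 (min_le_right _ _)
  have ex : mu Q (wt A K) x = mu Q (wt A K) r + mu Q (wt A K) a := by
    rw [← mu_add Q hw hr ha]; congr 1; ext t; simp [a]
  have ey : mu Q (wt A K) y = mu Q (wt A K) r + mu Q (wt A K) b := by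
    rw [← mu_add Q hw hr hb]; congr 1; ext t; simp [b]
  have px := mu_prob Q hA hK hx
  have py := mu_prob Q hA hK hy
  have fr : IsFiniteMeasure (mu Q (wt A K) r) :=
    isFiniteMeasure_of_le (mu Q (wt A K) x) (ex ▸ Measure.le_add_right le_rfl)
  have fa : IsFiniteMeasure (mu Q (wt A K) a) :=
    isFiniteMeasure_of_le (mu Q (wt A K) x) (ex ▸ Measure.le_add_left le_rfl)
  have fb : IsFiniteMeasure (mu Q (wt A K) b) :=
    isFiniteMeasure_of_le (mu Q (wt A K) y) (ey ▸ Measure.le_add_left le_rfl)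
  have hmass : mu Q (wt A K) a univ = mu Q (wt A K) b univ := by
    have h1 : mu Q (wt A K) r univ + mu Q (wt A K) a univ = 1 := by
      rw [← Measure.add_apply, ← ex]; exact measure_univ
    have h2 : mu Q (wt A K) r univ + mu Q (wt A K) b univ = 1 := by
      rw [← Measure.add_apply, ← ey]; exact measure_univ
    exact (ENNReal.add_right_inj (measure_ne_top _ _)).1 (h1.trans h2.symm)
  have hn : ∑' t, ENNReal.ofReal |(x - y) t| = ENNReal.ofReal ‖x - y‖ := by
    rw [XX.norm_eq, ENNReal.ofReal_tsum_of_nonneg (fun _ => abs_nonneg _) (XX.summable_abs _)]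
  rw [ex, ey]
  refine W1_le_aux _ _ _ hmass _ (by positivity) ?_
  rw [two_mul, ENNReal.ofReal_add (norm_nonneg _) (norm_nonneg _), ← hn]
  refine add_le_add ((mom_mu Q hw hQ a).trans ?_) ((mom_mu Q hw hQ b).trans ?_)
  · refine ENNReal.tsum_le_tsum fun t => ENNReal.ofReal_le_ofReal ?_
    simp only [a, r, lp.coeFn_sub, Pi.sub_apply]
    rcases le_total (x t) (y t) with h | h
    · simp [min_eq_left h]
    · rw [min_eq_right h]; exact le_abs_self _
  · refine ENNReal.tsum_le_tsum fun t => ENNReal.ofReal_le_ofReal ?_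
    simp only [b, r, lp.coeFn_sub, Pi.sub_apply]
    rcases le_total (x t) (y t) with h | h
    · rw [min_eq_left h, abs_sub_comm]; exact le_abs_self _
    · simp [min_eq_right h]

theorem mu_integral {d : ℕ} (Q : CT → Measure (Vec d)) [∀ t, IsProbabilityMeasure (Q t)]
    {A K R : ℝ} (hA : 1 ≤ A) (hK : 1 ≤ K) {x : XX} (hx : x ∈ SS A K R) {φ : Vec d → ℝ}
    (hφ : Measurable φ) {M : ℝ} (hM : ∀ v, |φ v| ≤ M) :
    ∫ v, φ v ∂(mu Q (wt A K) x) = ∑' t, ((wt A K t)⁻¹ * ∫ v, φ v ∂(Q t)) * x t := by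
  have := mu_prob Q hA hK hx
  have hi : Integrable φ (mu Q (wt A K) x) :=
    Integrable.of_bound hφ.aestronglyMeasurable M (Filter.Eventually.of_forall hM)
  unfold mu at hi ⊢
  rw [integral_sum_measure hi]
  congr 1; ext1 t
  have h1 := wt_ge hA hK t; have := hx.1 t
  rw [integral_smul_measure, ENNReal.toReal_ofReal (by positivity), smul_eq_mul]
  ring

/-- tree measures -/
def Qt {d m : ℕ} (𝒞 : Vec d → Vec d → Vec m → Vec d) (b : Measure (Vec m)) (f₀ : Measure (Vec d)) :
    CT → Measure (Vec d)
  | .leaf => f₀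
  | .node s t => Qgain 𝒞 b (Qt 𝒞 b f₀ s) (Qt 𝒞 b f₀ t)

theorem Qgain_prob {d m : ℕ} {𝒞 : Vec d → Vec d → Vec m → Vec d} (b : Measure (Vec m))
    [IsProbabilityMeasure b]
    (hmeas : Measurable fun p : (Vec d × Vec d) × Vec m => 𝒞 p.1.1 p.1.2 p.2)
    (f g : Measure (Vec d)) [IsProbabilityMeasure f] [IsProbabilityMeasure g] :
    IsProbabilityMeasure (Qgain 𝒞 b f g) :=
  Measure.isProbabilityMeasure_map hmeas.aemeasurable

theorem Qgain_mom {d m : ℕ} {𝒞 : Vec d → Vec d → Vec m → Vec d} (b : Measure (Vec m))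
    [IsProbabilityMeasure b] {Mb Cc : ℝ} (hCc : 0 < Cc) (hMb : 0 ≤ Mb) (hb : ∀ᵐ θ ∂b, ‖θ‖ ≤ Mb)
    (hmeas : Measurable fun p : (Vec d × Vec d) × Vec m => 𝒞 p.1.1 p.1.2 p.2)
    (hgrow : ∀ v vs θ, ‖𝒞 v vs θ‖ ≤ Cc * (1 + ‖θ‖) * (‖v‖ + ‖vs‖))
    (f g : Measure (Vec d)) [IsProbabilityMeasure f] [IsProbabilityMeasure g] :
    mom (Qgain 𝒞 b f g) ≤ ENNReal.ofReal (Cc * (1 + Mb)) * (mom f + mom g) := by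
  unfold mom Qgain
  rw [lintegral_map (by fun_prop) hmeas]
  have hb' : ∀ᵐ p ∂((f.prod g).prod b), ‖p.2‖ ≤ Mb :=
    (measurePreserving_snd (μ := f.prod g) (ν := b)).quasiMeasurePreserving.ae hb
  calc ∫⁻ p, ‖𝒞 p.1.1 p.1.2 p.2‖ₑ ∂((f.prod g).prod b)
      ≤ ∫⁻ p, ENNReal.ofReal (Cc * (1 + Mb)) * (‖p.1.1‖ₑ + ‖p.1.2‖ₑ) ∂((f.prod g).prod b) := by
        refine lintegral_mono_ae ?_
        filter_upwards [hb'] with p hp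
        rw [← ofReal_norm, ← ofReal_norm, ← ofReal_norm, ← ENNReal.ofReal_add (norm_nonneg _)
          (norm_nonneg _), ← ENNReal.ofReal_mul (by positivity)]
        refine ENNReal.ofReal_le_ofReal ((hgrow _ _ _).trans ?_)
        gcongr
    _ = ENNReal.ofReal (Cc * (1 + Mb)) * (∫⁻ p, ‖p.1.1‖ₑ ∂((f.prod g).prod b) +
          ∫⁻ p, ‖p.1.2‖ₑ ∂((f.prod g).prod b)) := by
        rw [lintegral_const_mul _ (by fun_prop), lintegral_add_left (by fun_prop)]
    _ = _ := by
        have m1 : MeasurePreserving (fun p : (Vec d × Vec d) × Vec m => p.1.1)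
            ((f.prod g).prod b) f := measurePreserving_fst.comp measurePreserving_fst
        have m2 : MeasurePreserving (fun p : (Vec d × Vec d) × Vec m => p.1.2)
            ((f.prod g).prod b) g := measurePreserving_snd.comp measurePreserving_fst
        rw [m1.lintegral_comp (f := fun v => ‖v‖ₑ) (by fun_prop),
          m2.lintegral_comp (f := fun v => ‖v‖ₑ) (by fun_prop)]

theorem Qt_prob {d m : ℕ} {𝒞 : Vec d → Vec d → Vec m → Vec d} (b : Measure (Vec m))
    [IsProbabilityMeasure b]
    (hmeas : Measurable fun p : (Vec d × Vec d) × Vec m => 𝒞 p.1.1 p.1.2 p.2)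
    (f₀ : Measure (Vec d)) [IsProbabilityMeasure f₀] (t : CT) :
    IsProbabilityMeasure (Qt 𝒞 b f₀ t) := by
  induction t with
  | leaf => assumption
  | node s t hs ht => exact Qgain_prob b hmeas _ _

theorem Qt_mom {d m : ℕ} {𝒞 : Vec d → Vec d → Vec m → Vec d} (b : Measure (Vec m))
    [IsProbabilityMeasure b] {Mb Cc : ℝ} (hCc : 0 < Cc) (hMb : 0 ≤ Mb) (hb : ∀ᵐ θ ∂b, ‖θ‖ ≤ Mb)
    (hmeas : Measurable fun p : (Vec d × Vec d) × Vec m => 𝒞 p.1.1 p.1.2 p.2)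
    (hgrow : ∀ v vs θ, ‖𝒞 v vs θ‖ ≤ Cc * (1 + ‖θ‖) * (‖v‖ + ‖vs‖))
    (f₀ : Measure (Vec d)) [IsProbabilityMeasure f₀] {A K : ℝ} (hA : 1 ≤ A) (hK : 1 ≤ K)
    (h0 : mom f₀ ≤ ENNReal.ofReal A) (hK' : Cc * (1 + Mb) ≤ K) (t : CT) :
    mom (Qt 𝒞 b f₀ t) ≤ ENNReal.ofReal (wt A K t) := by
  induction t with
  | leaf => exact h0
  | node s t hs ht =>
    have := Qt_prob b hmeas f₀ s
    have := Qt_prob b hmeas f₀ t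
    have h1 := wt_ge hA hK s
    have h2 := wt_ge hA hK t
    refine (Qgain_mom b hCc hMb hb hmeas hgrow _ _).trans ?_
    simp only [wt]
    rw [ENNReal.ofReal_mul (p := K) (by linarith),
      ENNReal.ofReal_add (p := wt A K s) (by linarith) (by linarith)]
    exact mul_le_mul' (ENNReal.ofReal_le_ofReal hK') (add_le_add hs ht)

theorem mu_BB {d m : ℕ} {𝒞 : Vec d → Vec d → Vec m → Vec d} (b : Measure (Vec m))
    [IsProbabilityMeasure b]
    (hmeas : Measurable fun p : (Vec d × Vec d) × Vec m => 𝒞 p.1.1 p.1.2 p.2)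
    (f₀ : Measure (Vec d)) [IsProbabilityMeasure f₀] {A K : ℝ} (hA : 1 ≤ A) (hK : 1 ≤ K)
    {x : XX} (hx : ∀ t, 0 ≤ x t) :
    mu (Qt 𝒞 b f₀) (wt A K) (BB hA hK x x) =
      Qgain 𝒞 b (mu (Qt 𝒞 b f₀) (wt A K) x) (mu (Qt 𝒞 b f₀) (wt A K) x) := by
  have := Qt_prob b hmeas f₀
  have hsf : ∀ t, SFinite (ENNReal.ofReal ((wt A K t)⁻¹ * x t) • Qt 𝒞 b f₀ t) :=
    fun t => inferInstance
  unfold Qgain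
  conv_rhs => unfold mu
  rw [Measure.prod_sum, Measure.prod_sum_left, Measure.map_sum hmeas.aemeasurable]
  ext s hs
  unfold mu
  rw [Measure.sum_apply _ hs, Measure.sum_apply _ hs, CT.tsum_ennreal _ (by simp [BB, BBraw])]
  congr 1
  ext1 p
  rw [Measure.prod_smul_left, Measure.prod_smul_right, smul_smul, Measure.prod_smul_left,
    Measure.map_smul, Measure.smul_apply, Measure.smul_apply]
  have h1 := wt_ge hA hK p.1
  have h2 := wt_ge hA hK p.2
  have h3 := hx p.1
  have h4 := hx p.2
  rw [← ENNReal.ofReal_mul (by positivity)]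
  congr 2
  simp only [BB, XX.mk_apply, BBraw, kap, wt]
  field_simp

theorem collRHS_eq {d m : ℕ} {𝒞 : Vec d → Vec d → Vec m → Vec d} (b : Measure (Vec m))
    [IsProbabilityMeasure b]
    (hmeas : Measurable fun p : (Vec d × Vec d) × Vec m => 𝒞 p.1.1 p.1.2 p.2)
    (f : Measure (Vec d)) [IsProbabilityMeasure f] {φ : Vec d → ℝ}
    (hφ : Measurable φ) {M : ℝ} (hM : ∀ v, |φ v| ≤ M) :
    collRHS 𝒞 b f φ = ∫ v, φ v ∂(Qgain 𝒞 b f f) - ∫ v, φ v ∂f := by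
  have m1 : MeasurePreserving (fun p : (Vec d × Vec d) × Vec m => p.1.1)
      ((f.prod f).prod b) f := measurePreserving_fst.comp measurePreserving_fst
  have m2 : MeasurePreserving (fun p : (Vec d × Vec d) × Vec m => p.1.2)
      ((f.prod f).prod b) f := measurePreserving_snd.comp measurePreserving_fst
  have m3 : MeasurePreserving (fun p : (Vec d × Vec d) × Vec m => ((p.1.2, p.1.1), p.2))
      ((f.prod f).prod b) ((f.prod f).prod b) :=
    (Measure.measurePreserving_swap (μ := f) (ν := f)).prod (MeasurePreserving.id b)
  have integ : ∀ ψ : (Vec d × Vec d) × Vec m → Vec d, Measurable ψ →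
      Integrable (fun p => φ (ψ p)) ((f.prod f).prod b) := fun ψ hψ =>
    Integrable.of_bound (hφ.comp hψ).aestronglyMeasurable M
      (Filter.Eventually.of_forall fun _ => hM _)
  have i1 := integ _ hmeas
  have i2 := integ _ (hmeas.comp m3.measurable)
  have i3 := integ _ m1.measurable
  have i4 := integ _ m2.measurable
  simp only [Function.comp_apply] at i2
  have e1 : ∫ p, φ (𝒞 p.1.1 p.1.2 p.2) ∂((f.prod f).prod b) = ∫ v, φ v ∂(Qgain 𝒞 b f f) := by
    unfold Qgain
    rw [integral_map hmeas.aemeasurable hφ.aestronglyMeasurable]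
  have e2 : ∫ p, φ (𝒞 p.1.2 p.1.1 p.2) ∂((f.prod f).prod b) = ∫ v, φ v ∂(Qgain 𝒞 b f f) := by
    rw [← e1]
    conv_rhs => rw [← m3.map_eq]
    exact (integral_map m3.measurable.aemeasurable (hφ.comp hmeas).aestronglyMeasurable).symm
  have e3 : ∫ p, φ p.1.1 ∂((f.prod f).prod b) = ∫ v, φ v ∂f := by
    conv_rhs => rw [← m1.map_eq]
    rw [integral_map m1.measurable.aemeasurable hφ.aestronglyMeasurable]
  have e4 : ∫ p, φ p.1.2 ∂((f.prod f).prod b) = ∫ v, φ v ∂f := by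
    conv_rhs => rw [← m2.map_eq]
    rw [integral_map m2.measurable.aemeasurable hφ.aestronglyMeasurable]
  unfold collRHS
  have j1 := integral_sub ((i1.add i2).sub i3) i4
  have j2 := integral_sub (i1.add i2) i3
  simp only [Pi.add_apply, Pi.sub_apply] at j1 j2
  rw [j1, j2, integral_add i1 i2, e1, e2, e3, e4]
  ring

theorem mu_startDatum {d : ℕ} (Q : CT → Measure (Vec d)) {A K : ℝ} (hA : 1 ≤ A) :
    mu Q (wt A K) (startDatum A) = Q .leaf := by
  ext s hs
  unfold mu
  rw [Measure.sum_apply _ hs, tsum_eq_single CT.leaf]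
  · simp only [startDatum, XX.mk_apply, wt]
    rw [inv_mul_cancel₀ (by linarith)]
    simp
  · intro t ht
    cases t with
    | leaf => simp at ht
    | node a b => simp [startDatum]

theorem eulerSeq_eq {d m : ℕ} {𝒞 : Vec d → Vec d → Vec m → Vec d} (b : Measure (Vec m))
    [IsProbabilityMeasure b]
    (hmeas : Measurable fun p : (Vec d × Vec d) × Vec m => 𝒞 p.1.1 p.1.2 p.2)
    (f₀ : Measure (Vec d)) [IsProbabilityMeasure f₀] {A K : ℝ} (hA : 1 ≤ A) (hK : 1 ≤ K)
    {h : ℝ} (h0 : 0 ≤ h) (h1 : h ≤ 1) (n : ℕ) :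
    eulerSeq 𝒞 b f₀ h n = mu (Qt 𝒞 b f₀) (wt A K) (eulX (X := XX) (GG hA hK) (startDatum A) h n : XX) := by
  induction n with
  | zero => simp only [eulerSeq, eulX]; rw [mu_startDatum _ hA, Qt]
  | succ n ih =>
    have hm := eul_mem hA hK h0 h1 n
    have hB := BB_mem hA hK hm
    simp only [eulerSeq, eulX]
    rw [ih]
    set x := eulX (GG hA hK) (startDatum A) h n
    rw [← mu_BB b hmeas f₀ hA hK hm.1, ← mu_smul _ (sub_nonneg.2 h1), ← mu_smul _ h0,
      ← mu_add _ (wt_ge hA hK)]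
    · congr 1
      ext t
      simp only [GG, lp.coeFn_add, lp.coeFn_smul, lp.coeFn_sub, Pi.add_apply, Pi.smul_apply,
        Pi.sub_apply, smul_eq_mul]
      ring
    · intro t; exact mul_nonneg (sub_nonneg.2 h1) (hm.1 t)
    · intro t; exact mul_nonneg h0 (hB.1 t)

theorem eulerInterp_eq {d m : ℕ} {𝒞 : Vec d → Vec d → Vec m → Vec d} (b : Measure (Vec m))
    [IsProbabilityMeasure b]
    (hmeas : Measurable fun p : (Vec d × Vec d) × Vec m => 𝒞 p.1.1 p.1.2 p.2)
    (f₀ : Measure (Vec d)) [IsProbabilityMeasure f₀] {A K : ℝ} (hA : 1 ≤ A) (hK : 1 ≤ K)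
    {h : ℝ} (h0 : 0 < h) (h1 : h ≤ 1) {t : ℝ} (ht : 0 ≤ t) :
    eulerInterp 𝒞 b f₀ h t = mu (Qt 𝒞 b f₀) (wt A K) (eulU (X := XX) (GG hA hK) (startDatum A) h t : XX) := by
  have hm := floor_mem h0 ht
  unfold eulerInterp eulU
  set n := ⌊t / h⌋.toNat
  rw [eulerSeq_eq b hmeas f₀ hA hK h0.le h1, eulerSeq_eq b hmeas f₀ hA hK h0.le h1]
  have hx := eul_mem hA hK h0.le h1 n
  have hy := eul_mem hA hK h0.le h1 (n + 1)
  have l0 : 0 ≤ (t - n * h) / h := div_nonneg (by linarith [hm.1]) h0.le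
  have l1 : 0 ≤ 1 - (t - n * h) / h := by
    rw [sub_nonneg, div_le_one h0]; nlinarith [hm.2]
  rw [← mu_smul _ l0, ← mu_smul _ l1, ← mu_add _ (wt_ge hA hK)]
  · congr 1
    ext s
    simp only [eulX, lp.coeFn_add, lp.coeFn_smul, Pi.add_apply, Pi.smul_apply, smul_eq_mul]
    field_simp
    ring
  · intro s; exact mul_nonneg l1 (hx.1 s)
  · intro s; exact mul_nonneg l0 (hy.1 s)

/-- existence of a weak measure solution of the Boltzmann-type
equation, obtained as the uniform-in-time Wasserstein-1 limit of the
piecewise-linear forward Euler interpolants with `Δt_k = T/2^k`. -/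
theorem weak_solution_existence (d m : ℕ) (b : Measure (Vec m)) [IsProbabilityMeasure b]
    (Mb Lc Cc : ℝ) (hMb : 0 ≤ Mb) (hLc : 0 < Lc) (hCc : 0 < Cc)
    (hb : ∀ᵐ θ ∂b, ‖θ‖ ≤ Mb)
    (𝒞 : Vec d → Vec d → Vec m → Vec d)
    (hmeas : Measurable fun p : (Vec d × Vec d) × Vec m => 𝒞 p.1.1 p.1.2 p.2)
    (hlip : ∀ v vs w ws θ,
      ‖𝒞 v vs θ - 𝒞 w ws θ‖ ≤ Lc * (1 + ‖θ‖) * (‖v - w‖ + ‖vs - ws‖))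
    (hgrow : ∀ v vs θ, ‖𝒞 v vs θ‖ ≤ Cc * (1 + ‖θ‖) * (‖v‖ + ‖vs‖))
    (f₀ : Measure (Vec d)) [IsProbabilityMeasure f₀]
    (hf₀ : Integrable (fun v : Vec d => ‖v‖) f₀)
    (T : ℝ) (hT : 0 < T) :
    ∃ f : ℝ → Measure (Vec d), f 0 = f₀ ∧ IsWeakSol 𝒞 b T f ∧
      ∀ ε > (0:ℝ), ∃ K : ℕ, ∀ k ≥ K, ∀ t ∈ Set.Icc (0:ℝ) T,
        W1 (eulerInterp 𝒞 b f₀ (T / 2 ^ k) t) (f t) ≤ ε := by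
  let A : ℝ := 1 + ∫ v, ‖v‖ ∂f₀
  have hA : 1 ≤ A := le_add_of_nonneg_right (integral_nonneg fun _ => norm_nonneg _)
  let K : ℝ := 1 + Cc * (1 + Mb)
  have hK : 1 ≤ K := le_add_of_nonneg_right (by positivity)
  let Q := Qt 𝒞 b f₀
  have hQp : ∀ t, IsProbabilityMeasure (Q t) := Qt_prob b hmeas f₀
  have h0 : mom f₀ ≤ ENNReal.ofReal A := by
    have h1 : ENNReal.ofReal (∫ v, ‖v‖ ∂f₀) = mom f₀ := by
      rw [ofReal_integral_eq_lintegral_ofReal hf₀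
        (Filter.Eventually.of_forall fun _ => norm_nonneg _)]
      simp only [ofReal_norm]; rfl
    rw [← h1]
    exact ENNReal.ofReal_le_ofReal (le_add_of_nonneg_left zero_le_one)
  have hQ : ∀ t, mom (Q t) ≤ ENNReal.ofReal (wt A K t) :=
    Qt_mom b hCc hMb hb hmeas hgrow f₀ hA hK h0 (le_add_of_nonneg_left zero_le_one)
  let R : ℝ := Real.exp (2 * K * (T + 1)) * A
  have hR : 0 ≤ R := by positivity
  obtain ⟨k0, hk0⟩ := pow_unbounded_of_one_lt T (one_lt_two : (1:ℝ) < 2)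
  have hstep : ∀ k ≥ k0, T / 2 ^ k ≤ 1 := by
    intro k hk
    rw [div_le_one (by positivity)]
    exact hk0.le.trans (pow_le_pow_right₀ one_le_two hk)
  have hpos : ∀ k : ℕ, 0 < T / 2 ^ k := fun k => by positivity
  have hx : ∀ k ≥ k0, ∀ n ≤ 2 ^ k + 1, eulX (GG hA hK) (startDatum A) (T / 2 ^ k) n ∈ SS A K R := by
    intro k hk n hn
    obtain ⟨e1, e2, e3⟩ := eul_mem hA hK (hpos k).le (hstep k hk) n
    refine ⟨e1, e2, e3.trans ?_⟩
    have hn' : (n : ℝ) ≤ 2 ^ k + 1 := by exact_mod_cast hn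
    have h2 : (n : ℝ) * (T / 2 ^ k) ≤ T + 1 := by
      calc (n : ℝ) * (T / 2 ^ k) ≤ (2 ^ k + 1) * (T / 2 ^ k) := by
            gcongr
        _ = T + T / 2 ^ k := by field_simp
        _ ≤ T + 1 := by linarith [hstep k hk]
    have hK0 : 0 ≤ K := by linarith
    simp only [R]
    gcongr
  obtain ⟨hUm, p, hp0, hpc, hpS, hlim, hI⟩ := eulU_limit hT (GG hA hK) (SS A K R)
    (SS_closed hA hK R) (SS_convex hA hK R) _ (GG_lip hA hK hR) _ (GG_bound hA hK hR) (startDatum A)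
    k0 hx
  refine ⟨fun t => mu Q (wt A K) (p t), ?_, ⟨?_, ?_, ?_, ?_⟩, ?_⟩
  · simp only [hp0]; exact mu_startDatum Q hA
  · exact fun t _ => mu_prob Q hA hK (hpS t)
  · exact fun t _ => mu_int Q hA hK hQ (hpS t)
  · intro t _ ε hε
    obtain ⟨δ, hδ, hd⟩ := Metric.continuousAt_iff.1 hpc.continuousAt (ε / 2) (half_pos hε)
    refine ⟨δ, hδ, fun s _ hs => ?_⟩
    have h1 := hd (x := s) hs
    rw [dist_eq_norm] at h1
    have h2 := W1_mu Q hA hK hQ (hpS s) (hpS t)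
    linarith
  · intro φ hφ hφc t ht
    have hφm : Measurable φ := hφ.continuous.measurable
    obtain ⟨M, hM⟩ := hφc.exists_bound_of_continuous hφ.continuous
    have hc : ∀ t, |(wt A K t)⁻¹ * ∫ v, φ v ∂(Q t)| ≤ M := by
      intro t
      have h1 : ‖∫ v, φ v ∂(Q t)‖ ≤ M := by
        simpa using norm_integral_le_of_norm_le_const (μ := Q t) (Filter.Eventually.of_forall hM)
      rw [abs_mul]
      have h2 := wt_inv_abs hA hK t
      rw [Real.norm_eq_abs] at h1
      nlinarith [abs_nonneg (∫ v, φ v ∂(Q t))]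
    let ℓ := XX.func _ M hc
    have hℓ : ∀ (r : ℝ) (x : XX), x ∈ SS A K r → ∫ v, φ v ∂(mu Q (wt A K) x) = ℓ x :=
      fun r x hx => mu_integral Q hA hK hx hφm hM
    have hcoll : ∀ s, collRHS 𝒞 b (mu Q (wt A K) (p s)) φ = ℓ (GG hA hK (p s)) := by
      intro s
      have := mu_prob Q hA hK (hpS s)
      rw [collRHS_eq b hmeas _ hφm hM, ← mu_BB b hmeas f₀ hA hK (hpS s).1,
        hℓ _ _ (BB_mem hA hK (hpS s)), hℓ _ _ (hpS s)]
      unfold GG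
      rw [map_sub]
    have hGp : Continuous fun s => GG hA hK (p s) :=
      (GG_lip hA hK hR).continuousOn.comp_continuous hpc hpS
    simp only [hcoll]
    rw [hℓ _ _ (hpS t), hℓ _ _ (hpS 0), ← map_sub, hI t ht,
      ← ContinuousLinearMap.intervalIntegral_comp_comm ℓ (hGp.intervalIntegrable 0 t)]
  · intro ε hε
    obtain ⟨k1, hk1⟩ := hlim (ε / 2) (half_pos hε)
    refine ⟨max k0 k1, fun k hk t ht => ?_⟩
    have hka : k ≥ k0 := (le_max_left _ _).trans hk
    have h1 := hk1 k ((le_max_right _ _).trans hk) t ht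
    rw [eulerInterp_eq b hmeas f₀ hA hK (hpos k) (hstep k hka) ht.1]
    have h2 := W1_mu Q hA hK hQ (hUm k hka t ht) (hpS t)
    linarith

end
end

section
/- (Uniqueness of weak measure solutions.) Under the assumptions that b is a probability measure on Θ with bounded support and 𝒞 satisfies the Lipschitz condition |𝒞(v,v*,θ)−𝒞(w,w*,θ)| ≤ L_𝒞(1+|θ|)(|v−w|+|v*−w*|) and linear growth |𝒞(v,v*,θ)| ≤ C_𝒞(1+|θ|)(|v|+|v*|), let f₁, f₂ ∈ C([0,T], P₁(ℝ^d)) be two weak measure solutions of ∂_t f = Q(f,f) on [0,T] with the same initial datum f₁(0) = f₂(0) = f₀ ∈ P₁(ℝ^d). Then f₁(t) = f₂(t) for all t ∈ [0,T]. -/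
open MeasureTheory ProbabilityTheory Set
open scoped ENNReal

noncomputable section

/-- From compactly supported smooth test functions to bounded continuous ones. -/
lemma aux_approx {d : ℕ} (μ ν : Measure (Vec d)) [IsProbabilityMeasure μ] [IsProbabilityMeasure ν]
    (a : ℝ)
    (h : ∀ φ : Vec d → ℝ, ContDiff ℝ (⊤ : ℕ∞) φ → HasCompactSupport φ →
      ∀ M : ℝ, (∀ v, |φ v| ≤ M) → |(∫ v, φ v ∂μ) - ∫ v, φ v ∂ν| ≤ M * a)
    (ψ : Vec d → ℝ) (hψ : Continuous ψ) (M : ℝ) (hM : ∀ v, |ψ v| ≤ M) :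
    |(∫ v, ψ v ∂μ) - ∫ v, ψ v ∂ν| ≤ M * a := by
  have key : ∀ n : ℕ, ∃ g : Vec d → ℝ, ContDiff ℝ (⊤ : ℕ∞) g ∧ HasCompactSupport g ∧
      ∀ v, |g v - max 0 (min 1 ((n : ℝ) + 1 - ‖v‖)) * ψ v| ≤ 1 / ((n : ℝ) + 1) := by
    intro n
    have hc : Continuous (fun v : Vec d => max 0 (min 1 ((n : ℝ) + 1 - ‖v‖)) * ψ v) := by
      fun_prop
    have hpos : (0 : ℝ) < 1 / ((n : ℝ) + 1) := by positivity
    obtain ⟨g, hg, hd, hs⟩ := hc.exists_contDiff_approx ⊤ (ε := fun _ => 1 / ((n : ℝ) + 1))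
      continuous_const (fun _ => hpos)
    refine ⟨g, hg, ?_, fun v => ?_⟩
    · refine HasCompactSupport.of_support_subset_isCompact
        (isCompact_closedBall (0 : Vec d) ((n : ℝ) + 1)) (hs.trans ?_)
      intro v hv
      by_contra hv'
      apply hv
      have : (n : ℝ) + 1 - ‖v‖ < 0 := by
        simp only [Metric.mem_closedBall, dist_zero_right, not_le] at hv'
        linarith
      have h2 : max 0 (min 1 ((n : ℝ) + 1 - ‖v‖)) = 0 :=
        max_eq_left ((min_le_right _ _).trans this.le)
      simp [h2]
    · have := hd v
      rw [Real.dist_eq] at this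
      exact this.le
  choose g hg hgc hgd using key
  have hχ : ∀ (n : ℕ) (v : Vec d), |max 0 (min 1 ((n : ℝ) + 1 - ‖v‖)) * ψ v| ≤ M := by
    intro n v
    rw [abs_mul]
    have h1 : |max 0 (min 1 ((n : ℝ) + 1 - ‖v‖))| ≤ 1 := by
      rw [abs_of_nonneg (le_max_left _ _)]
      exact max_le zero_le_one (min_le_left _ _)
    calc _ ≤ 1 * |ψ v| := by gcongr
      _ ≤ M := by rw [one_mul]; exact hM v
  have hgb : ∀ n v, |g n v| ≤ M + 1 / ((n : ℝ) + 1) := by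
    intro n v
    have := abs_add_le (g n v - max 0 (min 1 ((n : ℝ) + 1 - ‖v‖)) * ψ v)
      (max 0 (min 1 ((n : ℝ) + 1 - ‖v‖)) * ψ v)
    rw [sub_add_cancel] at this
    linarith [hgd n v, hχ n v]
  have hinv : Filter.Tendsto (fun n : ℕ => 1 / ((n : ℝ) + 1)) Filter.atTop (nhds 0) :=
    tendsto_one_div_add_atTop_nhds_zero_nat
  have hlim : ∀ v, Filter.Tendsto (fun n => g n v) Filter.atTop (nhds (ψ v)) := by
    intro v
    rw [tendsto_iff_dist_tendsto_zero]
    refine squeeze_zero' (Filter.Eventually.of_forall fun _ => dist_nonneg) ?_ hinv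
    obtain ⟨N, hN⟩ := exists_nat_ge ‖v‖
    filter_upwards [Filter.eventually_ge_atTop N] with n hn
    have hn' : (N : ℝ) ≤ n := by exact_mod_cast hn
    have := hgd n v
    rw [min_eq_left (by linarith), max_eq_right zero_le_one, one_mul] at this
    rwa [Real.dist_eq]
  have hint : ∀ (κ : Measure (Vec d)) [IsProbabilityMeasure κ],
      Filter.Tendsto (fun n => ∫ v, g n v ∂κ) Filter.atTop (nhds (∫ v, ψ v ∂κ)) := by
    intro κ _
    refine tendsto_integral_of_dominated_convergence (fun _ => M + 1)
      (fun n => (hg n).continuous.aestronglyMeasurable) (integrable_const _) ?_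
      (Filter.Eventually.of_forall hlim)
    intro n
    refine Filter.Eventually.of_forall fun v => ?_
    rw [Real.norm_eq_abs]
    refine (hgb n v).trans ?_
    have : 1 / ((n : ℝ) + 1) ≤ 1 := by
      rw [div_le_one (by positivity)]
      have : (0 : ℝ) ≤ n := Nat.cast_nonneg n
      linarith
    linarith
  have hL := ((hint μ).sub (hint ν)).abs
  have hR : Filter.Tendsto (fun n : ℕ => (M + 1 / ((n : ℝ) + 1)) * a) Filter.atTop
      (nhds ((M + 0) * a)) := (hinv.const_add M).mul_const a
  rw [add_zero] at hR
  exact le_of_tendsto_of_tendsto' hL hR fun n => h (g n) (hg n) (hgc n) _ (hgb n)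

/-- Lipschitz test functions are controlled by `W1`. -/
lemma aux_W1 {d : ℕ} (μ ν : Measure (Vec d)) [IsProbabilityMeasure μ] [IsProbabilityMeasure ν]
    (hμ : Integrable (fun v : Vec d => ‖v‖) μ) (hν : Integrable (fun v : Vec d => ‖v‖) ν)
    (ε : ℝ) (hW : W1 μ ν < ε) (K : ℝ) (hK : 0 ≤ K) (ψ : Vec d → ℝ)
    (hψ : ∀ v w, |ψ v - ψ w| ≤ K * ‖v - w‖) (hc : Continuous ψ) (B : ℝ) (hB : ∀ v, |ψ v| ≤ B) :
    |(∫ v, ψ v ∂μ) - ∫ v, ψ v ∂ν| ≤ K * ε := by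
  unfold W1 at hW
  have hne : { c : ℝ | ∃ γ : Measure (Vec d × Vec d),
      γ.map Prod.fst = μ ∧ γ.map Prod.snd = ν ∧ c = ∫ p, ‖p.1 - p.2‖ ∂γ }.Nonempty :=
    ⟨_, μ.prod ν, by simp, by simp, rfl⟩
  obtain ⟨c, ⟨γ, h1, h2, rfl⟩, hcε⟩ := exists_lt_of_csInf_lt hne hW
  have hγ : IsProbabilityMeasure γ := by
    constructor
    have : μ Set.univ = 1 := measure_univ
    rw [← h1, Measure.map_apply measurable_fst MeasurableSet.univ] at this
    simpa using this
  have e1 : ∫ v, ψ v ∂μ = ∫ p, ψ p.1 ∂γ := by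
    rw [← h1, integral_map measurable_fst.aemeasurable hc.aestronglyMeasurable]
  have e2 : ∫ v, ψ v ∂ν = ∫ p, ψ p.2 ∂γ := by
    rw [← h2, integral_map measurable_snd.aemeasurable hc.aestronglyMeasurable]
  have i1 : Integrable (fun p : Vec d × Vec d => ψ p.1) γ :=
    Integrable.of_bound (by fun_prop) B (Filter.Eventually.of_forall fun p => hB p.1)
  have i2 : Integrable (fun p : Vec d × Vec d => ψ p.2) γ :=
    Integrable.of_bound (by fun_prop) B (Filter.Eventually.of_forall fun p => hB p.2)
  have n1 : Integrable (fun p : Vec d × Vec d => ‖p.1‖) γ := by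
    rw [← h1] at hμ
    exact hμ.comp_measurable measurable_fst
  have n2 : Integrable (fun p : Vec d × Vec d => ‖p.2‖) γ := by
    rw [← h2] at hν
    exact hν.comp_measurable measurable_snd
  have n3 : Integrable (fun p : Vec d × Vec d => ‖p.1 - p.2‖) γ := by
    refine (n1.add n2).mono' (by fun_prop) (Filter.Eventually.of_forall fun p => ?_)
    rw [norm_norm]
    exact norm_sub_le _ _
  rw [e1, e2, ← integral_sub i1 i2]
  calc |∫ p, (ψ p.1 - ψ p.2) ∂γ| ≤ ∫ p, |ψ p.1 - ψ p.2| ∂γ := abs_integral_le_integral_abs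
    _ ≤ ∫ p, K * ‖p.1 - p.2‖ ∂γ :=
        integral_mono (i1.sub i2).abs (n3.const_mul K) fun p => hψ p.1 p.2
    _ = K * ∫ p, ‖p.1 - p.2‖ ∂γ := integral_const_mul _ _
    _ ≤ K * ε := by gcongr

/-- Splitting of the quadratic form. -/
lemma aux_split {d : ℕ} (μ ν : Measure (Vec d)) [IsProbabilityMeasure μ] [IsProbabilityMeasure ν]
    (H : Vec d → Vec d → ℝ) (K B e : ℝ)
    (hcont : Continuous fun p : Vec d × Vec d => H p.1 p.2)
    (hK : ∀ v w v' w', |H v w - H v' w'| ≤ K * (‖v - v'‖ + ‖w - w'‖))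
    (hB : ∀ v w, |H v w| ≤ B)
    (h : ∀ ψ : Vec d → ℝ, Continuous ψ → (∀ v w, |ψ v - ψ w| ≤ K * ‖v - w‖) →
      (∀ v, |ψ v| ≤ B) → |(∫ v, ψ v ∂μ) - ∫ v, ψ v ∂ν| ≤ e) :
    |(∫ v, ∫ w, H v w ∂μ ∂μ) - ∫ v, ∫ w, H v w ∂ν ∂ν| ≤ 2 * e := by
  have main : ∀ (κ : Measure (Vec d)) [IsProbabilityMeasure κ] (G : Vec d → Vec d → ℝ),
      (Continuous fun p : Vec d × Vec d => G p.1 p.2) →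
      (∀ v w v' w', |G v w - G v' w'| ≤ K * (‖v - v'‖ + ‖w - w'‖)) →
      (∀ v w, |G v w| ≤ B) →
      |(∫ v, ∫ w, G v w ∂κ ∂μ) - ∫ v, ∫ w, G v w ∂κ ∂ν| ≤ e := by
    intro κ _ G hGc hGK hGB
    have hi : ∀ v, Integrable (fun w => G v w) κ := fun v =>
      Integrable.of_bound (Continuous.aestronglyMeasurable
        (hGc.comp (Continuous.prodMk_right v))) B (Filter.Eventually.of_forall fun w => hGB v w)
    have hl : ∀ v w, |(∫ z, G v z ∂κ) - ∫ z, G w z ∂κ| ≤ K * ‖v - w‖ := by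
      intro v w
      rw [← integral_sub (hi v) (hi w)]
      have := norm_integral_le_of_norm_le_const (μ := κ) (f := fun z => G v z - G w z)
        (C := K * ‖v - w‖) (Filter.Eventually.of_forall fun z => by
          simpa using hGK v z w z)
      simpa using this
    refine h (fun v => ∫ w, G v w ∂κ) ?_ hl ?_
    · refine continuous_of_dominated (bound := fun _ => B) (fun v => (hi v).aestronglyMeasurable)
        (fun v => Filter.Eventually.of_forall fun w => hGB v w) (integrable_const _)
        (Filter.Eventually.of_forall fun w => hGc.comp (Continuous.prodMk_left w))
    · intro v
      have := norm_integral_le_of_norm_le_const (μ := κ) (f := fun z => G v z)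
        (C := B) (Filter.Eventually.of_forall fun z => hGB v z)
      simpa using this
  have t1 := main μ H hcont hK hB
  have t2 := main ν (fun v w => H w v) (hcont.comp continuous_swap)
    (fun v w v' w' => by rw [add_comm]; exact hK w v w' v') (fun v w => hB w v)
  have sw : ∫ v, ∫ w, H w v ∂ν ∂μ = ∫ v, ∫ w, H v w ∂μ ∂ν := by
    refine integral_integral_swap (f := fun v w => H w v) ?_
    exact Integrable.of_bound (hcont.comp continuous_swap).aestronglyMeasurable B
      (Filter.Eventually.of_forall fun p => hB p.2 p.1)
  have sw2 : ∫ v, ∫ w, H w v ∂ν ∂ν = ∫ v, ∫ w, H v w ∂ν ∂ν := by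
    refine integral_integral_swap (f := fun v w => H w v) ?_
    exact Integrable.of_bound (hcont.comp continuous_swap).aestronglyMeasurable B
      (Filter.Eventually.of_forall fun p => hB p.2 p.1)
  rw [sw, sw2] at t2
  rw [abs_le] at *
  constructor <;> linarith [t1.1, t1.2, t2.1, t2.2]

/-- The collision form as a bounded Lipschitz quadratic form. -/
lemma aux_coll {d m : ℕ} (b : Measure (Vec m)) [IsProbabilityMeasure b]
    (Mb Lc : ℝ) (hMb : 0 ≤ Mb) (hLc : 0 < Lc)
    (hb : ∀ᵐ θ ∂b, ‖θ‖ ≤ Mb)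
    (𝒞 : Vec d → Vec d → Vec m → Vec d)
    (hmeas : Measurable fun p : (Vec d × Vec d) × Vec m => 𝒞 p.1.1 p.1.2 p.2)
    (hlip : ∀ v vs w ws θ,
      ‖𝒞 v vs θ - 𝒞 w ws θ‖ ≤ Lc * (1 + ‖θ‖) * (‖v - w‖ + ‖vs - ws‖))
    (φ : Vec d → ℝ) (hφ : ContDiff ℝ (⊤ : ℕ∞) φ) (hs : HasCompactSupport φ)
    (M : ℝ) (hM : ∀ v, |φ v| ≤ M) :
    ∃ K : ℝ, 0 ≤ K ∧ ∀ (μ ν : Measure (Vec d)) [IsProbabilityMeasure μ] [IsProbabilityMeasure ν]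
      (e : ℝ), (∀ ψ : Vec d → ℝ, Continuous ψ → (∀ v w, |ψ v - ψ w| ≤ K * ‖v - w‖) →
      (∀ v, |ψ v| ≤ 4 * M) → |(∫ v, ψ v ∂μ) - ∫ v, ψ v ∂ν| ≤ e) →
      |collRHS 𝒞 b μ φ - collRHS 𝒞 b ν φ| ≤ e := by
  obtain ⟨L, hL⟩ := ContDiff.lipschitzWith_of_hasCompactSupport hs hφ (by simp)
  have hL' : ∀ x y, |φ x - φ y| ≤ L * ‖x - y‖ := by
    intro x y
    have := hL.dist_le_mul x y
    rwa [Real.dist_eq, dist_eq_norm] at this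
  set G : (Vec d × Vec d) × Vec m → ℝ := fun p =>
    φ (𝒞 p.1.1 p.1.2 p.2) + φ (𝒞 p.1.2 p.1.1 p.2) - φ p.1.1 - φ p.1.2 with hG
  have hφm : Measurable φ := hφ.continuous.measurable
  have hsw : Measurable fun p : (Vec d × Vec d) × Vec m => 𝒞 p.1.2 p.1.1 p.2 :=
    hmeas.comp (g := fun p : (Vec d × Vec d) × Vec m => 𝒞 p.1.1 p.1.2 p.2)
      (f := fun p : (Vec d × Vec d) × Vec m => ((p.1.2, p.1.1), p.2)) (by fun_prop)
  have hGm : Measurable G :=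
    (((hφm.comp hmeas).add (hφm.comp hsw)).sub (by fun_prop)).sub (by fun_prop)
  have hGB : ∀ p, |G p| ≤ 4 * M := by
    intro p
    have a1 := abs_le.1 (hM (𝒞 p.1.1 p.1.2 p.2))
    have a2 := abs_le.1 (hM (𝒞 p.1.2 p.1.1 p.2))
    have a3 := abs_le.1 (hM p.1.1)
    have a4 := abs_le.1 (hM p.1.2)
    rw [abs_le]
    simp only [hG]
    constructor <;> linarith [a1.1, a1.2, a2.1, a2.2, a3.1, a3.2, a4.1, a4.2]
  set K : ℝ := L * (2 * (Lc * (1 + Mb)) + 1) with hKdef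
  have hK0 : 0 ≤ K := by positivity
  have hi : ∀ q : Vec d × Vec d, Integrable (fun θ => G (q, θ)) b := fun q =>
    Integrable.of_bound (hGm.comp measurable_prodMk_left).aestronglyMeasurable (4 * M)
      (Filter.Eventually.of_forall fun θ => hGB (q, θ))
  set H : Vec d → Vec d → ℝ := fun v w => ∫ θ, G ((v, w), θ) ∂b with hH
  have hHK : ∀ v w v' w', |H v w - H v' w'| ≤ K * (‖v - v'‖ + ‖w - w'‖) := by
    intro v w v' w'
    simp only [hH]
    rw [← integral_sub (hi (v, w)) (hi (v', w'))]
    have := norm_integral_le_of_norm_le_const (μ := b)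
        (f := fun θ => G ((v, w), θ) - G ((v', w'), θ))
        (C := K * (‖v - v'‖ + ‖w - w'‖)) (by
          filter_upwards [hb] with θ hθ
          have l1 := hL' (𝒞 v w θ) (𝒞 v' w' θ)
          have l2 := hL' (𝒞 w v θ) (𝒞 w' v' θ)
          have l3 := hL' v v'
          have l4 := hL' w w'
          have q : ∀ x y x' y', ‖𝒞 x y θ - 𝒞 x' y' θ‖ ≤
              Lc * (1 + Mb) * (‖x - x'‖ + ‖y - y'‖) := by
            intro x y x' y'
            refine (hlip x y x' y' θ).trans ?_
            gcongr
          have l1' := l1.trans (mul_le_mul_of_nonneg_left (q v w v' w') L.coe_nonneg)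
          have l2' := l2.trans (mul_le_mul_of_nonneg_left (q w v w' v') L.coe_nonneg)
          have b1 := abs_le.1 l1'
          have b2 := abs_le.1 l2'
          have b3 := abs_le.1 l3
          have b4 := abs_le.1 l4
          rw [Real.norm_eq_abs, abs_le]
          simp only [hG, hKdef]
          constructor <;> nlinarith [b1.1, b1.2, b2.1, b2.2, b3.1, b3.2, b4.1, b4.2])
    simpa using this
  have hHB : ∀ v w, |H v w| ≤ 4 * M := by
    intro v w
    have := norm_integral_le_of_norm_le_const (μ := b) (f := fun θ => G ((v, w), θ))
        (C := 4 * M) (Filter.Eventually.of_forall fun z => hGB _)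
    simpa using this
  have hHc : Continuous fun p : Vec d × Vec d => H p.1 p.2 := by
    rw [continuous_iff_continuousAt]
    intro p
    rw [ContinuousAt, tendsto_iff_dist_tendsto_zero]
    refine squeeze_zero (g := fun q : Vec d × Vec d => K * (‖q.1 - p.1‖ + ‖q.2 - p.2‖))
      (fun _ => dist_nonneg) (fun q => ?_) ?_
    · rw [Real.dist_eq]
      exact hHK _ _ _ _
    · have : Continuous fun q : Vec d × Vec d => K * (‖q.1 - p.1‖ + ‖q.2 - p.2‖) := by fun_prop
      simpa using this.tendsto p
  have hcoll : ∀ (κ : Measure (Vec d)) [IsProbabilityMeasure κ],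
      collRHS 𝒞 b κ φ = (1/2) * ∫ v, ∫ w, H v w ∂κ ∂κ := by
    intro κ _
    have hGi : Integrable G ((κ.prod κ).prod b) :=
      Integrable.of_bound hGm.aestronglyMeasurable (4 * M)
        (Filter.Eventually.of_forall hGB)
    unfold collRHS
    congr 1
    change ∫ p, G p ∂((κ.prod κ).prod b) = _
    rw [integral_prod _ hGi]
    rw [integral_prod _ hGi.integral_prod_left]
  refine ⟨K, hK0, fun μ ν _ _ e he => ?_⟩
  have := aux_split μ ν H K (4 * M) e hHc hHK hHB he
  rw [hcoll μ, hcoll ν, ← mul_sub, abs_mul, abs_of_pos (by norm_num : (0:ℝ) < 1/2)]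
  linarith

lemma aux_cont {d m : ℕ} (b : Measure (Vec m)) [IsProbabilityMeasure b]
    (Mb Lc : ℝ) (hMb : 0 ≤ Mb) (hLc : 0 < Lc)
    (hb : ∀ᵐ θ ∂b, ‖θ‖ ≤ Mb)
    (𝒞 : Vec d → Vec d → Vec m → Vec d)
    (hmeas : Measurable fun p : (Vec d × Vec d) × Vec m => 𝒞 p.1.1 p.1.2 p.2)
    (hlip : ∀ v vs w ws θ,
      ‖𝒞 v vs θ - 𝒞 w ws θ‖ ≤ Lc * (1 + ‖θ‖) * (‖v - w‖ + ‖vs - ws‖))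
    (T : ℝ) (f : ℝ → Measure (Vec d)) (hf : IsWeakSol 𝒞 b T f)
    (φ : Vec d → ℝ) (hφ : ContDiff ℝ (⊤ : ℕ∞) φ) (hs : HasCompactSupport φ)
    (M : ℝ) (hM : ∀ v, |φ v| ≤ M) :
    ContinuousOn (fun s => collRHS 𝒞 b (f s) φ) (Set.Icc 0 T) := by
  obtain ⟨K, hK, hc⟩ := aux_coll b Mb Lc hMb hLc hb 𝒞 hmeas hlip φ hφ hs M hM
  obtain ⟨hp, hi, hw, -⟩ := hf
  rw [Metric.continuousOn_iff]
  intro t ht ε hε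
  obtain ⟨δ, hδ, h⟩ := hw t ht (ε / (K + 1)) (by positivity)
  refine ⟨δ, hδ, fun s hs' hst => ?_⟩
  have := hp s hs'
  have := hp t ht
  rw [Real.dist_eq] at hst ⊢
  refine (hc (f s) (f t) (K * (ε / (K + 1))) ?_).trans_lt ?_
  · intro ψ h1 h2 h3
    exact aux_W1 (f s) (f t) (hi s hs') (hi t ht) _ (h s hs' hst) K hK ψ h2 h1 _ h3
  · rw [mul_div_assoc', div_lt_iff₀ (by positivity)]
    nlinarith

/-- uniqueness of weak measure solutions with the same initial datum. -/
theorem weak_solution_uniqueness (d m : ℕ) (b : Measure (Vec m)) [IsProbabilityMeasure b]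
    (Mb Lc Cc : ℝ) (hMb : 0 ≤ Mb) (hLc : 0 < Lc) (hCc : 0 < Cc)
    (hb : ∀ᵐ θ ∂b, ‖θ‖ ≤ Mb)
    (𝒞 : Vec d → Vec d → Vec m → Vec d)
    (hmeas : Measurable fun p : (Vec d × Vec d) × Vec m => 𝒞 p.1.1 p.1.2 p.2)
    (hlip : ∀ v vs w ws θ,
      ‖𝒞 v vs θ - 𝒞 w ws θ‖ ≤ Lc * (1 + ‖θ‖) * (‖v - w‖ + ‖vs - ws‖))
    (hgrow : ∀ v vs θ, ‖𝒞 v vs θ‖ ≤ Cc * (1 + ‖θ‖) * (‖v‖ + ‖vs‖))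
    (T : ℝ) (hT : 0 < T)
    (f₁ f₂ : ℝ → Measure (Vec d))
    (h₁ : IsWeakSol 𝒞 b T f₁) (h₂ : IsWeakSol 𝒞 b T f₂)
    (h0 : f₁ 0 = f₂ 0) :
    ∀ t ∈ Set.Icc (0:ℝ) T, f₁ t = f₂ t := by
  have step : ∀ n : ℕ, ∀ t ∈ Set.Icc (0:ℝ) T, ∀ φ : Vec d → ℝ, ContDiff ℝ (⊤ : ℕ∞) φ →
      HasCompactSupport φ → ∀ M : ℝ, (∀ v, |φ v| ≤ M) →
      |(∫ v, φ v ∂(f₁ t)) - ∫ v, φ v ∂(f₂ t)| ≤ M * (2 * ((4 * t) ^ n / n.factorial)) := by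
    intro n
    induction n with
    | zero =>
      intro t ht φ _ _ M hM
      have := h₁.1 t ht
      have := h₂.1 t ht
      have a1 := norm_integral_le_of_norm_le_const (μ := f₁ t) (f := φ)
        (C := M) (Filter.Eventually.of_forall fun z => hM z)
      have a2 := norm_integral_le_of_norm_le_const (μ := f₂ t) (f := φ)
        (C := M) (Filter.Eventually.of_forall fun z => hM z)
      simp only [probReal_univ, mul_one, Real.norm_eq_abs] at a1 a2
      have b1 := abs_le.1 a1
      have b2 := abs_le.1 a2
      simp only [pow_zero, Nat.factorial_zero, Nat.cast_one, div_one, mul_one]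
      rw [abs_le]
      constructor <;> linarith [b1.1, b1.2, b2.1, b2.2]
    | succ n ih =>
      intro t ht φ hφ hs M hM
      have e1 := h₁.2.2.2 φ hφ hs t ht
      have e2 := h₂.2.2.2 φ hφ hs t ht
      have hsub : Set.uIcc 0 t ⊆ Set.Icc 0 T := by
        rw [Set.uIcc_of_le ht.1]
        exact Set.Icc_subset_Icc_right ht.2
      have c1 := ((aux_cont b Mb Lc hMb hLc hb 𝒞 hmeas hlip T f₁ h₁ φ hφ hs M hM).mono
        hsub).intervalIntegrable (μ := volume)
      have c2 := ((aux_cont b Mb Lc hMb hLc hb 𝒞 hmeas hlip T f₂ h₂ φ hφ hs M hM).mono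
        hsub).intervalIntegrable (μ := volume)
      have eq : (∫ v, φ v ∂(f₁ t)) - ∫ v, φ v ∂(f₂ t) =
          ∫ s in (0:ℝ)..t, (collRHS 𝒞 b (f₁ s) φ - collRHS 𝒞 b (f₂ s) φ) := by
        rw [intervalIntegral.integral_sub c1 c2, ← e1, ← e2, h0]
        ring
      obtain ⟨K, hK, hc⟩ := aux_coll b Mb Lc hMb hLc hb 𝒞 hmeas hlip φ hφ hs M hM
      have bd : ∀ s ∈ Set.Icc (0:ℝ) T, |collRHS 𝒞 b (f₁ s) φ - collRHS 𝒞 b (f₂ s) φ| ≤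
          4 * M * (2 * ((4 * s) ^ n / n.factorial)) := by
        intro s hs'
        have := h₁.1 s hs'
        have := h₂.1 s hs'
        refine hc (f₁ s) (f₂ s) _ fun ψ hψc _ hψb => ?_
        exact aux_approx (f₁ s) (f₂ s) _ (ih s hs') ψ hψc _ hψb
      rw [eq]
      have hle := intervalIntegral.norm_integral_le_of_norm_le (μ := volume) (a := 0) (b := t)
        (f := fun s => collRHS 𝒞 b (f₁ s) φ - collRHS 𝒞 b (f₂ s) φ)
        (g := fun s => 4 * M * (2 * ((4 * s) ^ n / n.factorial))) ht.1
        (Filter.Eventually.of_forall fun s hs' => bd s ⟨hs'.1.le, hs'.2.trans ht.2⟩)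
        (Continuous.intervalIntegrable (by fun_prop) _ _)
      rw [Real.norm_eq_abs] at hle
      refine hle.trans (le_of_eq ?_)
      have hfun : (fun s : ℝ => 4 * M * (2 * ((4 * s) ^ n / n.factorial))) =
          fun s : ℝ => (4 * M * (2 * (4 ^ n / n.factorial))) * s ^ n := by
        funext s
        rw [mul_pow]
        ring
      rw [hfun, intervalIntegral.integral_const_mul, integral_pow, Nat.factorial_succ]
      push_cast
      have : (n.factorial : ℝ) ≠ 0 := by positivity
      have : (n : ℝ) + 1 ≠ 0 := by positivity
      field_simp
      ring
  intro t ht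
  have := h₁.1 t ht
  have := h₂.1 t ht
  refine ext_of_forall_integral_eq_of_IsFiniteMeasure fun g => ?_
  have hz := aux_approx (f₁ t) (f₂ t) 0 (fun φ hφ hs M hM => by
    have hl : Filter.Tendsto (fun n : ℕ => M * (2 * ((4 * t) ^ n / n.factorial))) Filter.atTop
        (nhds (M * (2 * 0))) :=
      ((FloorSemiring.tendsto_pow_div_factorial_atTop (4 * t)).const_mul 2).const_mul M
    rw [mul_zero] at hl
    exact ge_of_tendsto' hl fun n => step n t ht φ hφ hs M hM) g g.continuous ‖g‖
    (fun v => g.norm_coe_le_norm v)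
  rw [mul_zero] at hz
  exact sub_eq_zero.1 (abs_nonpos_iff.1 hz)

end
end
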